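/- arXiv:2311.07542 — 4 statements merged into one kernel-verified Lean document; each statement's English description precedes it below -/
import Mathlib

section
/- Let n ≥ 2, let Γ ⊂ ℝⁿ satisfy condition (C) with −λ* = (−1,1,…,1) ∈ Γ, and let B be the open unit ball of ℝⁿ. Suppose v satisfies λ(A[v]) ∈ ℝⁿ∖Γ in B∖{0} in the viscosity sense and lim_{|x|→0} ( v(x) + 2·log|x| ) = −∞. Then limsup_{x→0} v(x) < +∞, and if one sets v(0) := limsup_{x→0} v(x) (possibly −∞), then v is upper semi-continuous on B and is upperconical at 0. -/
open Filter Topology MeasureTheory Metric Set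
open scoped BigOperators ENNReal NNReal Classical

noncomputable section

/-- `ℝⁿ` with the Euclidean norm. -/
abbrev Euc (n : ℕ) := EuclideanSpace ℝ (Fin n)

/-- The positive cone `Γₙ = {λ : λᵢ > 0 ∀ i}`. -/
def GammaN (n : ℕ) : Set (Fin n → ℝ) := {lam | ∀ i, 0 < lam i}

/-- Condition (C): `Γ ⊊ ℝⁿ` is a nonempty open symmetric cone with vertex at the origin
satisfying `Γ + Γₙ ⊆ Γ`. -/
def CondC {n : ℕ} (Γ : Set (Fin n → ℝ)) : Prop :=
  Γ.Nonempty ∧ Γ ≠ Set.univ ∧ IsOpen Γ ∧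
    (∀ σ : Equiv.Perm (Fin n), ∀ lam ∈ Γ, lam ∘ σ ∈ Γ) ∧
    (∀ lam ∈ Γ, ∀ t : ℝ, 0 < t → t • lam ∈ Γ) ∧
    (∀ lam ∈ Γ, ∀ mu ∈ GammaN n, lam + mu ∈ Γ)

/-- `λ* = (1, -1, …, -1)`. -/
def lamStar (n : ℕ) : Fin n → ℝ := fun i => if i.val = 0 then 1 else -1

/-- Partial derivative `∂ᵢ v (x)`. -/
def pgrad {n : ℕ} (v : Euc n → ℝ) (x : Euc n) (i : Fin n) : ℝ :=
  fderiv ℝ v x (EuclideanSpace.single i 1)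

/-- Second partial derivative `∂ᵢ∂ⱼ v (x)`. -/
def phess {n : ℕ} (v : Euc n → ℝ) (x : Euc n) (i j : Fin n) : ℝ :=
  fderiv ℝ (fun y => fderiv ℝ v y (EuclideanSpace.single j 1)) x (EuclideanSpace.single i 1)

/-- The Möbius Hessian
`A[v](x) = e^{-2v(x)} (-∇²v + ∇v ⊗ ∇v - ½ |∇v|² I)` as a matrix. -/
def mobius {n : ℕ} (v : Euc n → ℝ) (x : Euc n) : Matrix (Fin n) (Fin n) ℝ :=
  Real.exp (-2 * v x) • Matrix.of fun i j =>
    - phess v x i j + pgrad v x i * pgrad v x j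
      - (1 / 2) * (∑ k, (pgrad v x k) ^ 2) * (if i = j then (1 : ℝ) else 0)

/-- The (unordered, permutation-invariant) eigenvalue tuple of the symmetric matrix `M`
belongs to the (permutation-invariant) set `S`. -/
def EigIn {n : ℕ} (M : Matrix (Fin n) (Fin n) ℝ) (S : Set (Fin n → ℝ)) : Prop :=
  ∃ hM : M.IsHermitian, hM.eigenvalues ∈ S

/-- Viscosity supersolution of `λ(A[v]) ∈ ∂Γ` in `Ω`, i.e. `λ(A[v]) ∈ closure Γ`
in the viscosity sense (for a real-valued `v`). -/
def Supersol {n : ℕ} (Γ : Set (Fin n → ℝ)) (Ω : Set (Euc n)) (v : Euc n → ℝ) : Prop :=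
  ∀ x₀ ∈ Ω, ∀ φ : Euc n → ℝ, ContDiff ℝ 2 φ → φ x₀ = v x₀ →
    (∀ᶠ x in 𝓝[Ω] x₀, φ x ≤ v x) → EigIn (mobius φ x₀) (closure Γ)

/-- Viscosity subsolution of `λ(A[v]) ∈ ∂Γ` in `Ω`, i.e. `λ(A[v]) ∈ ℝⁿ ∖ Γ`
in the viscosity sense (for a real-valued `v`). -/
def Subsol {n : ℕ} (Γ : Set (Fin n → ℝ)) (Ω : Set (Euc n)) (v : Euc n → ℝ) : Prop :=
  ∀ x₀ ∈ Ω, ∀ φ : Euc n → ℝ, ContDiff ℝ 2 φ → φ x₀ = v x₀ →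
    (∀ᶠ x in 𝓝[Ω] x₀, v x ≤ φ x) → EigIn (mobius φ x₀) Γᶜ


/-- Viscosity supersolution of `λ(A[v]) ∈ ∂Γ` in `Ω`, i.e. `λ(A[v]) ∈ closure Γ` in the
viscosity sense, for an extended-real-valued `v`. -/
def SupersolE {n : ℕ} (Γ : Set (Fin n → ℝ)) (Ω : Set (Euc n)) (v : Euc n → EReal) : Prop :=
  ∀ x₀ ∈ Ω, ∀ φ : Euc n → ℝ, ContDiff ℝ 2 φ → (φ x₀ : EReal) = v x₀ →
    (∀ᶠ x in 𝓝[Ω] x₀, (φ x : EReal) ≤ v x) → EigIn (mobius φ x₀) (closure Γ)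

/-- Viscosity subsolution of `λ(A[v]) ∈ ∂Γ` in `Ω`, i.e. `λ(A[v]) ∈ ℝⁿ ∖ Γ` in the
viscosity sense, for an extended-real-valued `v`. -/
def SubsolE {n : ℕ} (Γ : Set (Fin n → ℝ)) (Ω : Set (Euc n)) (v : Euc n → EReal) : Prop :=
  ∀ x₀ ∈ Ω, ∀ φ : Euc n → ℝ, ContDiff ℝ 2 φ → (φ x₀ : EReal) = v x₀ →
    (∀ᶠ x in 𝓝[Ω] x₀, v x ≤ (φ x : EReal)) → EigIn (mobius φ x₀) Γᶜ

/-- `v` is lowerconical at `x₀ ∈ Ω` (Caffarelli–Li–Nirenberg): either `v x₀ = +∞`, or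
`v x₀ < +∞` and for every `ε > 0` and every smooth `η`,
`inf_{x ∈ Ω} ((v-η)(x) - (v-η)(x₀) - ε|x-x₀|) < 0`. -/
def LowerConical {n : ℕ} (Ω : Set (Euc n)) (v : Euc n → EReal) (x₀ : Euc n) : Prop :=
  v x₀ = ⊤ ∨ (v x₀ ≠ ⊤ ∧ ∀ ε : ℝ, 0 < ε → ∀ η : Euc n → ℝ, ContDiff ℝ (⊤ : ℕ∞) η →
    ∃ x ∈ Ω, v x - (η x : EReal) <
      v x₀ - (η x₀ : EReal) + ((ε * ‖x - x₀‖ : ℝ) : EReal))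

/-- `v` is upperconical at `x₀ ∈ Ω` iff `-v` is lowerconical at `x₀`. -/
def UpperConical {n : ℕ} (Ω : Set (Euc n)) (v : Euc n → EReal) (x₀ : Euc n) : Prop :=
  LowerConical Ω (fun x => -(v x)) x₀

/-!
The Möbius Hessian vanishes identically on the Möbius images of constants, which are the functions
`-log q` with `q` a quadratic polynomial such that `|∇q|²` is a constant multiple of `q`; among them
are the fundamental solution `-2 log |x|` and the bubbles `-log (1 + 2⟨b, x⟩ + |b|²|x|²)`. If `α`
and `β` are two such flat functions with `z = ∇α - ∇β ≠ 0` and `F` solves `F'' = ε F' (1 - F')` with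
`0 < F' < 1`, then the Möbius Hessian of `β + F(α - β)` is a positive multiple of
`½ |z|² I - (1 + ε) z ⊗ z`. Its eigenvalues are proportional to `(-1 - 2ε, 1, …, 1)`, which lies in
`Γ` for small `ε > 0` because `Γ` is open and contains `-λ*`; so `β + F(α - β)` is a strict
supersolution, a smooth version of `max β (α - const)`.

Taking `α = -2 log |x|` produces barriers that dominate `v` near the origin, and letting the
constant tend to infinity shows that an isolated singularity of `v` is invisible to comparison with
bubbles. If a cone `L + η(0) - η(x) - e|x|` touched `v` from above at the origin, with `L` the upper
limit of `v`, then comparison with a bubble whose gradient at the origin is `-∇η(0)` on a small ball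
of radius `r` would give `L ≤ L - er/2`.
-/

lemma exists_perm_comp_eq {ι β : Type*} [Fintype ι] {f g : ι → β}
    (h : Finset.univ.val.map f = Finset.univ.val.map g) : ∃ σ : Equiv.Perm ι, g ∘ σ = f := by
  have hcard (c : β) : Fintype.card {i // f i = c} = Fintype.card {i // g i = c} := by
    have hcount := congrArg (Multiset.count c) h
    simpa only [Multiset.count_map, eq_comm (a := c), Fintype.card_subtype, Finset.card_def,
      Finset.filter_val] using hcount
  let e (c : β) : {i // f i = c} ≃ {i // g i = c} := Fintype.equivOfCardEq (hcard c)
  refine ⟨(Equiv.sigmaFiberEquiv f).symm.trans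
    ((Equiv.sigmaCongrRight e).trans (Equiv.sigmaFiberEquiv g)), funext fun i => ?_⟩
  exact (e (f i) ⟨i, rfl⟩).2

section Eigenvalues

variable {n : ℕ} {S : Set (Fin n → ℝ)} {M : Matrix (Fin n) (Fin n) ℝ}

open Polynomial in
lemma eigIn_of_charpoly_eq (hS : ∀ σ : Equiv.Perm (Fin n), ∀ μ ∈ S, μ ∘ σ ∈ S)
    (hM : M.IsHermitian) {μ : Fin n → ℝ} (hμ : μ ∈ S)
    (h : M.charpoly = ∏ i, (X - C (μ i))) : EigIn M S := by
  have hroots : Finset.univ.val.map hM.eigenvalues = Finset.univ.val.map μ := by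
    rw [← Polynomial.roots_multiset_prod_X_sub_C (Finset.univ.val.map μ), Multiset.map_map]
    exact (hM.roots_charpoly_eq_eigenvalues.symm.trans (congrArg roots h) :)
  obtain ⟨σ, hσ⟩ := exists_perm_comp_eq hroots
  exact ⟨hM, hσ ▸ hS σ μ hμ⟩

/-- Invariance of a set of tuples under permutations of the coordinates and under dilations by
positive factors, as in condition (C) but with neither openness nor ellipticity. -/
structure IsSymmetricCone (S : Set (Fin n → ℝ)) : Prop where
  comp_perm : ∀ σ : Equiv.Perm (Fin n), ∀ μ ∈ S, μ ∘ σ ∈ S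
  smul_mem : ∀ μ ∈ S, ∀ t : ℝ, 0 < t → t • μ ∈ S

lemma EigIn.smul (hS : IsSymmetricCone S) (h : EigIn M S) {t : ℝ} (ht : 0 < t) :
    EigIn (t • M) S := by
  obtain ⟨hM, hMS⟩ := h
  refine eigIn_of_charpoly_eq hS.comp_perm (hM.smul (.all t)) (hS.smul_mem _ hMS t ht) ?_
  conv_lhs => rw [hM.spectral_theorem, ← map_smul, Unitary.conjStarAlgAut_apply,
    Matrix.charpoly_mul_comm, ← mul_assoc]
  simp [← Matrix.diagonal_smul, Matrix.charpoly_diagonal]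

open Polynomial in
lemma charpoly_smul_one_add_vecMulVec (i₀ : Fin n) (a : ℝ) (u z : Fin n → ℝ) :
    (a • (1 : Matrix (Fin n) (Fin n) ℝ) + Matrix.vecMulVec u z).charpoly =
      ∏ i, (X - C (Function.update (fun _ => a) i₀ (a + u ⬝ᵥ z) i)) := by
  have hshift : a • (1 : Matrix (Fin n) (Fin n) ℝ) + Matrix.vecMulVec u z =
      Matrix.vecMulVec u z - Matrix.scalar (Fin n) (-a) := by
    rw [map_neg, sub_neg_eq_add, add_comm, Matrix.smul_one_eq_diagonal, Matrix.scalar_apply]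
  have hpow (p : ℝ[X]) : p ^ n = p * p ^ (n - 1) := (mul_pow_sub_one i₀.pos.ne' p).symm
  have hprod : ∏ i ∈ Finset.univ.erase i₀,
      (X - C (Function.update (fun _ => a) i₀ (a + u ⬝ᵥ z) i)) = (X - C a) ^ (n - 1) := by
    rw [Finset.prod_congr rfl fun i hi => by rw [Function.update_of_ne (Finset.ne_of_mem_erase hi)],
      Finset.prod_const, Finset.card_erase_of_mem (Finset.mem_univ i₀), Finset.card_fin]
  rw [hshift, Matrix.charpoly_sub_scalar, Matrix.charpoly_vecMulVec,
    ← Finset.mul_prod_erase _ _ (Finset.mem_univ i₀), hprod, Function.update_self]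
  simp only [Fintype.card_fin, smul_eq_C_mul, sub_comp, mul_comp, pow_comp, X_comp, C_comp, C_neg,
    C_add, hpow]
  ring

end Eigenvalues

section Calculus

variable {n : ℕ} {f g : Euc n → ℝ} {x : Euc n}

lemma pgrad_congr (h : f =ᶠ[𝓝 x] g) : pgrad f x = pgrad g x := by
  funext i
  rw [pgrad, pgrad, h.fderiv_eq]

lemma phess_congr (h : f =ᶠ[𝓝 x] g) : phess f x = phess g x := by
  funext i j
  exact congrFun (pgrad_congr (h.eventuallyEq_nhds.mono fun _ hy => congrFun (pgrad_congr hy) j)) i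

lemma mobius_congr (h : f =ᶠ[𝓝 x] g) : mobius f x = mobius g x := by
  simp only [mobius, pgrad_congr h, phess_congr h, h.eq_of_nhds]

lemma pgrad_add_const (f : Euc n → ℝ) (c : ℝ) : pgrad (fun y => f y + c) = pgrad f := by
  funext y i
  rw [pgrad, pgrad, fderiv_add_const]

lemma phess_add_const (f : Euc n → ℝ) (c : ℝ) : phess (fun y => f y + c) = phess f := by
  funext y i j
  exact congrArg (fun F => pgrad (fun z => F z j) y i) (pgrad_add_const f c)

lemma mobius_add_const (f : Euc n → ℝ) (c : ℝ) (x : Euc n) :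
    mobius (fun y => f y + c) x = Real.exp (-2 * c) • mobius f x := by
  rw [mobius, mobius, pgrad_add_const, phess_add_const, smul_smul, ← Real.exp_add]
  congr 2
  ring

lemma pgrad_add (hf : DifferentiableAt ℝ f x) (hg : DifferentiableAt ℝ g x) :
    pgrad (fun y => f y + g y) x = pgrad f x + pgrad g x := by
  funext i
  simp only [pgrad, fderiv_fun_add hf hg, _root_.add_apply, Pi.add_apply]

lemma pgrad_sub (hf : DifferentiableAt ℝ f x) (hg : DifferentiableAt ℝ g x) :
    pgrad (fun y => f y - g y) x = pgrad f x - pgrad g x := by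
  funext i
  simp only [pgrad, fderiv_fun_sub hf hg, _root_.sub_apply, Pi.sub_apply]

lemma pgrad_mul (hf : DifferentiableAt ℝ f x) (hg : DifferentiableAt ℝ g x) :
    pgrad (fun y => f y * g y) x = f x • pgrad g x + g x • pgrad f x := by
  funext i
  simp only [pgrad, fderiv_fun_mul hf hg, _root_.add_apply, _root_.smul_apply, Pi.add_apply,
    Pi.smul_apply]

lemma pgrad_comp {F : ℝ → ℝ} (hF : DifferentiableAt ℝ F (f x)) (hf : DifferentiableAt ℝ f x) :
    pgrad (fun y => F (f y)) x = deriv F (f x) • pgrad f x := by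
  funext i
  have hcomp := hF.hasDerivAt.comp_hasFDerivAt x hf.hasFDerivAt
  rw [pgrad, show fderiv ℝ (fun y => F (f y)) x = _ from hcomp.fderiv]
  rfl

lemma eventually_differentiableAt (hf : ContDiffAt ℝ 2 f x) :
    ∀ᶠ y in 𝓝 x, DifferentiableAt ℝ f y :=
  (hf.eventually (by simp)).mono fun _ hy => hy.differentiableAt two_ne_zero

lemma differentiableAt_pgrad (hf : ContDiffAt ℝ 2 f x) (j : Fin n) :
    DifferentiableAt ℝ (fun y => pgrad f y j) x :=
  ((hf.fderiv_right (m := 1) (by norm_num)).differentiableAt one_ne_zero).clm_apply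
    (differentiableAt_const _)

lemma phess_add (hf : ContDiffAt ℝ 2 f x) (hg : ContDiffAt ℝ 2 g x) :
    phess (fun y => f y + g y) x = phess f x + phess g x := by
  funext i j
  have hpgrad : (fun y => pgrad (fun z => f z + g z) y j) =ᶠ[𝓝 x]
      fun y => pgrad f y j + pgrad g y j := by
    filter_upwards [eventually_differentiableAt hf, eventually_differentiableAt hg] with y hfy hgy
    rw [pgrad_add hfy hgy, Pi.add_apply]
  calc phess (fun y => f y + g y) x i j
      = pgrad (fun y => pgrad f y j + pgrad g y j) x i := congrFun (pgrad_congr hpgrad) i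
    _ = phess f x i j + phess g x i j :=
      congrFun (pgrad_add (differentiableAt_pgrad hf j) (differentiableAt_pgrad hg j)) i

lemma phess_sub (hf : ContDiffAt ℝ 2 f x) (hg : ContDiffAt ℝ 2 g x) :
    phess (fun y => f y - g y) x = phess f x - phess g x := by
  funext i j
  have hpgrad : (fun y => pgrad (fun z => f z - g z) y j) =ᶠ[𝓝 x]
      fun y => pgrad f y j - pgrad g y j := by
    filter_upwards [eventually_differentiableAt hf, eventually_differentiableAt hg] with y hfy hgy
    rw [pgrad_sub hfy hgy, Pi.sub_apply]
  calc phess (fun y => f y - g y) x i j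
      = pgrad (fun y => pgrad f y j - pgrad g y j) x i := congrFun (pgrad_congr hpgrad) i
    _ = phess f x i j - phess g x i j :=
      congrFun (pgrad_sub (differentiableAt_pgrad hf j) (differentiableAt_pgrad hg j)) i

lemma phess_comp {F : ℝ → ℝ} (hF : ContDiffAt ℝ 2 F (f x)) (hf : ContDiffAt ℝ 2 f x)
    (i j : Fin n) :
    phess (fun y => F (f y)) x i j =
      deriv F (f x) * phess f x i j + deriv (deriv F) (f x) * (pgrad f x i * pgrad f x j) := by
  have hF' : ∀ᶠ t in 𝓝 (f x), DifferentiableAt ℝ F t :=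
    (hF.eventually (by simp)).mono fun _ ht => ht.differentiableAt two_ne_zero
  have hderiv : DifferentiableAt ℝ (deriv F) (f x) :=
    ((hF.fderiv_right (m := 1) (by norm_num)).differentiableAt one_ne_zero).clm_apply
      (differentiableAt_const _)
  have hpgrad : (fun y => pgrad (fun z => F (f z)) y j) =ᶠ[𝓝 x]
      fun y => deriv F (f y) * pgrad f y j := by
    filter_upwards [eventually_differentiableAt hf, hf.continuousAt.eventually hF'] with y hfy hFy
    rw [pgrad_comp hFy hfy, Pi.smul_apply, smul_eq_mul]
  have hfx := hf.differentiableAt two_ne_zero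
  have hderivf : DifferentiableAt ℝ (fun y => deriv F (f y)) x := hderiv.comp x hfx
  calc phess (fun y => F (f y)) x i j
      = pgrad (fun y => deriv F (f y) * pgrad f y j) x i := congrFun (pgrad_congr hpgrad) i
    _ = deriv F (f x) * phess f x i j + pgrad f x j * (deriv (deriv F) (f x) * pgrad f x i) := by
      rw [pgrad_mul hderivf (differentiableAt_pgrad hf j), pgrad_comp hderiv hfx]
      rfl
    _ = _ := by ring

lemma exists_contDiff_eventuallyEq (hf : ContDiffAt ℝ 2 f x) :
    ∃ φ : Euc n → ℝ, ContDiff ℝ 2 φ ∧ φ =ᶠ[𝓝 x] f := by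
  obtain ⟨s, hs, hball⟩ := Metric.eventually_nhds_iff_ball.1 (hf.eventually (by simp))
  let χ : ContDiffBump x := ⟨s / 3, s / 2, by positivity, by linarith⟩
  refine ⟨fun y => χ y * f y, contDiff_iff_contDiffAt.2 fun y => ?_, ?_⟩
  · by_cases hy : y ∈ tsupport χ
    · refine χ.contDiff.contDiffAt.mul (hball y (closedBall_subset_ball (half_lt_self hs) ?_))
      rwa [χ.tsupport_eq] at hy
    · refine contDiffAt_const (c := 0) |>.congr_of_eventuallyEq ?_
      filter_upwards [notMem_tsupport_iff_eventuallyEq.1 hy] with z hz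
      rw [hz, Pi.zero_apply, zero_mul]
  · filter_upwards [χ.eventuallyEq_one] with y hy
    rw [hy, Pi.one_apply, one_mul]

end Calculus

section ConeArithmetic

variable {n : ℕ} {Γ : Set (Fin n → ℝ)}

lemma exists_update_mem_of_neg_lamStar_mem (hopen : IsOpen Γ)
    (hperm : ∀ σ : Equiv.Perm (Fin n), ∀ μ ∈ Γ, μ ∘ σ ∈ Γ) (hstar : (fun i => -(lamStar n i)) ∈ Γ) :
    ∃ ε : ℝ, 0 < ε ∧ ∀ i₀, Function.update (fun _ => 1) i₀ (-1 - 2 * ε) ∈ Γ := by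
  have hzero (i₀ : Fin n) : Function.update (fun _ => 1) i₀ (-1) ∈ Γ := by
    have hn : NeZero n := ⟨i₀.pos.ne'⟩
    convert hperm (Equiv.swap i₀ 0) _ hstar using 1
    funext i
    by_cases hi : i = i₀
    · simp [hi, lamStar]
    · have hswap : Equiv.swap i₀ 0 i ≠ 0 := fun h =>
        hi ((Equiv.swap i₀ 0).injective (h.trans (Equiv.swap_apply_left i₀ 0).symm))
      simp [hi, lamStar, Fin.val_eq_zero_iff, hswap]
  have hnear : ∀ᶠ ε : ℝ in 𝓝 0, ∀ i₀, Function.update (fun _ => 1) i₀ (-1 - 2 * ε) ∈ Γ := by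
    refine eventually_all.2 fun i₀ => ?_
    have hcont : Continuous fun ε : ℝ =>
        Function.update (fun _ : Fin n => (1 : ℝ)) i₀ (-1 - 2 * ε) := by fun_prop
    exact hcont.continuousAt.eventually_mem (hopen.mem_nhds (by simpa using hzero i₀))
  obtain ⟨ε, hε, hmem⟩ := (eventually_mem_nhdsWithin.and
    (hnear.filter_mono (nhdsWithin_le_nhds (s := Ioi 0)))).exists
  exact ⟨ε, hε, hmem⟩

lemma eigIn_smul_half_norm_sq_sub_vecMulVec (hΓ : IsSymmetricCone Γ) {ε : ℝ}
    (hε : ∀ i₀, Function.update (fun _ => 1) i₀ (-1 - 2 * ε) ∈ Γ) {z : Fin n → ℝ} (hz : z ≠ 0)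
    {K : ℝ} (hK : 0 < K) :
    EigIn (K • ((1 / 2 * z ⬝ᵥ z) • (1 : Matrix (Fin n) (Fin n) ℝ)
      - (1 + ε) • Matrix.vecMulVec z z)) Γ := by
  obtain ⟨i₀, -⟩ := Function.ne_iff.1 hz
  have hzz : 0 < 1 / 2 * z ⬝ᵥ z := by
    have hpos := Matrix.dotProduct_star_self_pos_iff.2 hz
    rw [star_trivial] at hpos
    positivity
  refine EigIn.smul hΓ
    (eigIn_of_charpoly_eq hΓ.comp_perm ?_ (hΓ.smul_mem _ (hε i₀) _ hzz) ?_) hK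
  · refine .sub (Matrix.isHermitian_one.smul (.all _)) (.smul ?_ (.all _))
    rw [Matrix.IsHermitian, Matrix.conjTranspose_vecMulVec, star_trivial]
  · rw [sub_eq_add_neg, ← neg_smul, ← Matrix.smul_vecMulVec,
      charpoly_smul_one_add_vecMulVec i₀]
    refine Finset.prod_congr rfl fun i _ => ?_
    congr 2
    by_cases hi : i = i₀
    · subst hi
      simp only [Function.update_self, smul_dotProduct, smul_eq_mul, Pi.smul_apply]
      ring
    · simp [hi]

end ConeArithmetic

section Flat

variable {n : ℕ} {f : Euc n → ℝ} {x : Euc n}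

lemma mobius_eq_zero_iff :
    mobius f x = 0 ↔ ∀ i j, phess f x i j =
      pgrad f x i * pgrad f x j - 1 / 2 * (∑ k, pgrad f x k ^ 2) * if i = j then 1 else 0 := by
  rw [mobius, smul_eq_zero_iff_right (Real.exp_ne_zero _), ← Matrix.ext_iff]
  refine forall₂_congr fun i j => ?_
  simp only [Matrix.of_apply, Matrix.zero_apply]
  constructor <;> intro h <;> linear_combination -h

lemma pgrad_neg_log (hf : DifferentiableAt ℝ f x) (h0 : f x ≠ 0) :
    pgrad (fun y => -Real.log (f y)) x = -(f x)⁻¹ • pgrad f x := by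
  rw [pgrad_comp (F := fun t => -Real.log t) (Real.differentiableAt_log h0).neg hf, deriv.fun_neg,
    Real.deriv_log]

lemma phess_neg_log (hf : ContDiffAt ℝ 2 f x) (h0 : f x ≠ 0) (i j : Fin n) :
    phess (fun y => -Real.log (f y)) x i j =
      -(f x)⁻¹ * phess f x i j + (f x ^ 2)⁻¹ * (pgrad f x i * pgrad f x j) := by
  have hderiv : deriv (fun t => -Real.log t) = fun t => -t⁻¹ := by
    rw [deriv.fun_neg', Real.deriv_log']
  rw [phess_comp (F := fun t => -Real.log t) (Real.contDiffAt_log.2 h0).neg hf, hderiv,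
    deriv.fun_neg, deriv_inv, neg_neg]

/-- The scalar-Hessian quadratic polynomials `c + 2⟨b, y⟩ + k|y|²`. When `|b|² = ck`, the function
`-log (quad c b k)` is a Möbius image of a constant and has vanishing Möbius Hessian. -/
def quad (c : ℝ) (b : Euc n) (k : ℝ) (y : Euc n) : ℝ := c + 2 * inner ℝ b y + k * ‖y‖ ^ 2

variable {c k : ℝ} {b : Euc n}

lemma contDiff_quad : ContDiff ℝ 2 (quad c b k) :=
  (contDiff_const.add (contDiff_const.mul (contDiff_const.inner ℝ contDiff_id))).add
    (contDiff_const.mul (contDiff_norm_sq ℝ))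

lemma pgrad_quad (x : Euc n) (i : Fin n) : pgrad (quad c b k) x i = 2 * b i + 2 * k * x i := by
  have hderiv : HasFDerivAt (quad c b k)
      ((2 : ℝ) • innerSL ℝ b + k • ((2 : ℕ) • innerSL ℝ x)) x :=
    (((innerSL ℝ b).hasFDerivAt.const_mul 2).const_add c).add
      ((hasStrictFDerivAt_norm_sq x).hasFDerivAt.const_mul k)
  rw [pgrad, hderiv.fderiv]
  simp only [_root_.add_apply, _root_.smul_apply, coe_innerSL_apply,
    EuclideanSpace.inner_single_right, Real.ringHom_apply, one_mul, smul_eq_mul, nsmul_eq_mul,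
    Nat.cast_ofNat]
  ring

lemma phess_quad (x : Euc n) (i j : Fin n) :
    phess (quad c b k) x i j = 2 * k * if i = j then 1 else 0 := by
  have hderiv : HasFDerivAt (fun y => pgrad (quad c b k) y j)
      ((2 * k) • EuclideanSpace.proj (𝕜 := ℝ) j) x := by
    simp only [pgrad_quad]
    exact ((EuclideanSpace.proj (𝕜 := ℝ) j).hasFDerivAt.const_mul (2 * k)).const_add (2 * b j)
  change fderiv ℝ (fun y => pgrad (quad c b k) y j) x _ = _
  rw [hderiv.fderiv]
  simp [eq_comm]

lemma sum_pgrad_quad_sq (hb : ‖b‖ ^ 2 = c * k) (x : Euc n) :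
    ∑ i, pgrad (quad c b k) x i ^ 2 = 4 * k * quad c b k x := by
  have hnorm : ∑ i, pgrad (quad c b k) x i ^ 2 = ‖(2 : ℝ) • (b + k • x)‖ ^ 2 := by
    rw [EuclideanSpace.real_norm_sq_eq]
    refine Finset.sum_congr rfl fun i _ => ?_
    simp only [pgrad_quad, PiLp.smul_apply, PiLp.add_apply, smul_eq_mul]
    ring
  rw [hnorm, norm_smul, mul_pow, norm_add_sq_real, norm_smul, real_inner_smul_right, mul_pow,
    Real.norm_eq_abs, Real.norm_eq_abs, sq_abs, sq_abs, hb, quad]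
  ring

lemma mobius_neg_log_quad (hb : ‖b‖ ^ 2 = c * k) (hx : quad c b k x ≠ 0) :
    mobius (fun y => -Real.log (quad c b k y)) x = 0 := by
  have hsum : ∑ i, pgrad (fun y => -Real.log (quad c b k y)) x i ^ 2 = 4 * k / quad c b k x := by
    simp only [pgrad_neg_log (contDiff_quad.differentiable two_ne_zero x) hx, Pi.smul_apply,
      smul_eq_mul, mul_pow, ← Finset.mul_sum, sum_pgrad_quad_sq hb]
    field_simp
  refine mobius_eq_zero_iff.2 fun i j => ?_
  rw [phess_neg_log contDiff_quad.contDiffAt hx, hsum, phess_quad,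
    pgrad_neg_log (contDiff_quad.differentiable two_ne_zero x) hx]
  simp only [Pi.smul_apply, smul_eq_mul]
  field_simp
  ring

lemma pgrad_neg_log_quad_dotProduct (hx : quad c b k x ≠ 0) :
    pgrad (fun y => -Real.log (quad c b k y)) x ⬝ᵥ x =
      -(quad c b k x)⁻¹ * (2 * (inner ℝ b x + k * ‖x‖ ^ 2)) := by
  rw [pgrad_neg_log (contDiff_quad.differentiable two_ne_zero x) hx, smul_dotProduct, smul_eq_mul,
    EuclideanSpace.real_norm_sq_eq, PiLp.inner_apply, Finset.mul_sum, ← Finset.sum_add_distrib,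
    Finset.mul_sum, dotProduct]
  congr 1
  refine Finset.sum_congr rfl fun i _ => ?_
  rw [pgrad_quad, Real.inner_apply]
  ring

/-- The fundamental solution `-2 log |y|` of the Möbius Hessian equation. -/
def fundamental (n : ℕ) (y : Euc n) : ℝ := -Real.log (quad 0 0 1 y)

/-- The Möbius image `-log (1 + 2⟨b, y⟩ + |b|²|y|²)` of the zero function, normalized to vanish at
the origin, where its gradient is `-2b`. It is singular only at `-b / |b|²`. -/
def bubble (b : Euc n) (y : Euc n) : ℝ := -Real.log (quad 1 b (‖b‖ ^ 2) y)

lemma fundamental_eq (x : Euc n) : fundamental n x = -(2 * Real.log ‖x‖) := by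
  simp [fundamental, quad]

lemma quad_zero_zero_one_ne_zero (hx : x ≠ 0) : quad 0 0 1 x ≠ 0 := by
  simpa [quad] using hx

lemma contDiffAt_fundamental (hx : x ≠ 0) : ContDiffAt ℝ 2 (fundamental n) x :=
  (contDiff_quad.contDiffAt.log (quad_zero_zero_one_ne_zero hx)).neg

lemma mobius_fundamental (hx : x ≠ 0) : mobius (fundamental n) x = 0 :=
  mobius_neg_log_quad (by simp) (quad_zero_zero_one_ne_zero hx)

lemma neg_one_lt_inner (hb : ‖b‖ * ‖x‖ < 1) : -1 < inner ℝ b x :=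
  (neg_lt_neg hb).trans_le (neg_le_of_abs_le (abs_real_inner_le_norm b x))

lemma quad_one_pos (hb : ‖b‖ * ‖x‖ < 1) : 0 < quad 1 b (‖b‖ ^ 2) x := by
  have hinner : -(‖b‖ * ‖x‖) ≤ inner ℝ b x := neg_le_of_abs_le (abs_real_inner_le_norm b x)
  unfold quad
  nlinarith [mul_pos (sub_pos.2 hb) (sub_pos.2 hb)]

lemma contDiffAt_bubble (hb : ‖b‖ * ‖x‖ < 1) : ContDiffAt ℝ 2 (bubble b) x :=
  (contDiff_quad.contDiffAt.log (quad_one_pos hb).ne').neg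

lemma bubble_apply_zero (b : Euc n) : bubble b 0 = 0 := by simp [bubble, quad]

lemma mobius_bubble (hb : ‖b‖ * ‖x‖ < 1) : mobius (bubble b) x = 0 :=
  mobius_neg_log_quad (one_mul _).symm (quad_one_pos hb).ne'

lemma pgrad_bubble_zero (b : Euc n) : pgrad (bubble b) 0 = fun i => -2 * b i := by
  have hone : quad 1 b (‖b‖ ^ 2) 0 = 1 := by simp [quad]
  funext i
  unfold bubble
  rw [pgrad_neg_log (contDiff_quad.differentiable two_ne_zero 0) (by rw [hone]; exact one_ne_zero),
    Pi.smul_apply, pgrad_quad, hone]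
  simp

lemma pgrad_fundamental_ne_pgrad_bubble (hx : x ≠ 0) (hb : ‖b‖ * ‖x‖ < 1) :
    pgrad (fundamental n) x ≠ pgrad (bubble b) x := by
  intro h
  have hquad := quad_one_pos hb
  have hradial := congrArg (· ⬝ᵥ (x : Fin n → ℝ)) h
  have hnorm : quad 0 0 1 x = ‖x‖ ^ 2 := by simp [quad]
  unfold fundamental bubble at hradial
  rw [pgrad_neg_log_quad_dotProduct (quad_zero_zero_one_ne_zero hx),
    pgrad_neg_log_quad_dotProduct hquad.ne', inner_zero_left, zero_add, one_mul, hnorm] at hradial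
  have hx_norm := norm_ne_zero_iff.2 hx
  field_simp at hradial
  unfold quad at hradial
  linarith [neg_one_lt_inner hb]

end Flat

section Interpolation

variable {n : ℕ} {α β : Euc n → ℝ} {x : Euc n}

lemma mobius_add_comp_sub {F : ℝ → ℝ} (hα : ContDiffAt ℝ 2 α x) (hβ : ContDiffAt ℝ 2 β x)
    (hF : ContDiffAt ℝ 2 F (α x - β x)) (hα0 : mobius α x = 0) (hβ0 : mobius β x = 0)
    {z : Fin n → ℝ} (hz : z = pgrad α x - pgrad β x) {s : ℝ} (hs : s = deriv F (α x - β x)) :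
    mobius (fun y => β y + F (α y - β y)) x = Real.exp (-2 * (β x + F (α x - β x))) •
      ((s * (1 - s)) • (1 / 2 * z ⬝ᵥ z) • (1 : Matrix (Fin n) (Fin n) ℝ)
        - (s * (1 - s) + deriv (deriv F) (α x - β x)) • Matrix.vecMulVec z z) := by
  have hαβ : ContDiffAt ℝ 2 (fun y => α y - β y) x := hα.sub hβ
  have hFαβ : ContDiffAt ℝ 2 (fun y => F (α y - β y)) x := hF.comp x hαβ
  have hgrad : pgrad (fun y => β y + F (α y - β y)) x = pgrad β x + s • z := by
    rw [pgrad_add (hβ.differentiableAt two_ne_zero) (hFαβ.differentiableAt two_ne_zero),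
      pgrad_comp (hF.differentiableAt two_ne_zero) (hαβ.differentiableAt two_ne_zero),
      pgrad_sub (hα.differentiableAt two_ne_zero) (hβ.differentiableAt two_ne_zero), hz, hs]
  have hhess (i j : Fin n) : phess (fun y => β y + F (α y - β y)) x i j = phess β x i j
      + (s * (phess α x i j - phess β x i j)
        + deriv (deriv F) (α x - β x) * (z i * z j)) := by
    rw [phess_add hβ hFαβ, Pi.add_apply, Pi.add_apply, phess_comp hF hαβ, phess_sub hα hβ,
      pgrad_sub (hα.differentiableAt two_ne_zero) (hβ.differentiableAt two_ne_zero), ← hz, ← hs,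
      Pi.sub_apply, Pi.sub_apply]
  have hsq (w : Fin n → ℝ) : ∑ k, w k ^ 2 = w ⬝ᵥ w := by simp only [dotProduct, sq]
  have hα' : pgrad α x = pgrad β x + z := by rw [hz, add_sub_cancel]
  rw [mobius]
  congr 1
  ext i j
  rw [Matrix.of_apply, hhess, hgrad, mobius_eq_zero_iff.1 hα0, mobius_eq_zero_iff.1 hβ0, hα']
  simp only [hsq]
  simp only [add_dotProduct, dotProduct_add, smul_dotProduct, dotProduct_smul,
    dotProduct_comm z (pgrad β x), Pi.add_apply, Pi.smul_apply, smul_eq_mul, Matrix.sub_apply,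
    Matrix.smul_apply, Matrix.one_apply, Matrix.vecMulVec_apply]
  ring

variable {ε δ : ℝ}

/-- A scaled softplus function: its derivative solves the logistic equation
`s' = ε s (1 - s)`, and `β + softPlus ε δ (α - β) = ε⁻¹ log (e^{εβ} + δ e^{εα})` is a smooth
substitute for `max β (α + ε⁻¹ log δ)`. -/
def softPlus (ε δ t : ℝ) : ℝ := ε⁻¹ * Real.log (1 + δ * Real.exp (ε * t))

lemma softPlus_pos (hε : 0 < ε) (hδ : 0 < δ) (t : ℝ) : 0 < softPlus ε δ t :=
  mul_pos (inv_pos.2 hε) (Real.log_pos (lt_add_of_pos_right 1 (by positivity)))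

lemma add_log_lt_softPlus (hε : 0 < ε) (hδ : 0 < δ) (t : ℝ) :
    t + ε⁻¹ * Real.log δ < softPlus ε δ t := by
  calc t + ε⁻¹ * Real.log δ = ε⁻¹ * Real.log (δ * Real.exp (ε * t)) := by
        rw [Real.log_mul hδ.ne' (Real.exp_ne_zero _), Real.log_exp]
        field_simp
        ring
    _ < softPlus ε δ t := by
        unfold softPlus
        gcongr
        exact lt_one_add _

lemma tendsto_softPlus (ε t : ℝ) : Tendsto (softPlus ε · t) (𝓝[>] 0) (𝓝 0) := by
  have hcont : ContinuousAt (softPlus ε · t) 0 := by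
    have hone : (1 : ℝ) + 0 * Real.exp (ε * t) ≠ 0 := by simp
    unfold softPlus
    fun_prop (disch := assumption)
  have hzero : softPlus ε 0 t = 0 := by simp [softPlus]
  exact (hzero ▸ hcont.tendsto).mono_left nhdsWithin_le_nhds

lemma contDiff_softPlus (hδ : 0 < δ) : ContDiff ℝ 2 (softPlus ε δ) :=
  contDiff_const.mul (ContDiff.log (by fun_prop) fun t => by positivity)

lemma hasDerivAt_one_add_mul_exp_mul (ε δ t : ℝ) :
    HasDerivAt (fun t => 1 + δ * Real.exp (ε * t)) (δ * (Real.exp (ε * t) * (ε * 1))) t :=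
  ((((hasDerivAt_id t).const_mul ε).exp).const_mul δ).const_add 1

lemma hasDerivAt_softPlus (hε : 0 < ε) (hδ : 0 < δ) (t : ℝ) :
    HasDerivAt (softPlus ε δ) (1 - (1 + δ * Real.exp (ε * t))⁻¹) t := by
  refine (((hasDerivAt_one_add_mul_exp_mul ε δ t).log (by positivity)).const_mul ε⁻¹).congr_deriv ?_
  field_simp
  ring

lemma deriv_softPlus_mem_Ioo (hε : 0 < ε) (hδ : 0 < δ) (t : ℝ) :
    deriv (softPlus ε δ) t ∈ Ioo 0 1 := by
  rw [(hasDerivAt_softPlus hε hδ t).deriv]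
  have hone : 1 < 1 + δ * Real.exp (ε * t) := lt_add_of_pos_right 1 (by positivity)
  exact ⟨sub_pos.2 (inv_lt_one_of_one_lt₀ hone), sub_lt_self 1 (by positivity)⟩

lemma deriv_deriv_softPlus (hε : 0 < ε) (hδ : 0 < δ) (t : ℝ) :
    deriv (deriv (softPlus ε δ)) t =
      ε * (deriv (softPlus ε δ) t * (1 - deriv (softPlus ε δ) t)) := by
  have hderiv : deriv (softPlus ε δ) = fun t => 1 - (1 + δ * Real.exp (ε * t))⁻¹ :=
    funext fun t => (hasDerivAt_softPlus hε hδ t).deriv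
  rw [hderiv, (((hasDerivAt_one_add_mul_exp_mul ε δ t).fun_inv (by positivity)).const_sub 1).deriv]
  field_simp
  ring

lemma eigIn_mobius_add_softPlus {Γ : Set (Fin n → ℝ)} (hΓ : IsSymmetricCone Γ) (hε : 0 < ε)
    (hmem : ∀ i₀, Function.update (fun _ => 1) i₀ (-1 - 2 * ε) ∈ Γ) (hδ : 0 < δ)
    (hα : ContDiffAt ℝ 2 α x) (hβ : ContDiffAt ℝ 2 β x) (hα0 : mobius α x = 0)
    (hβ0 : mobius β x = 0) (hne : pgrad α x ≠ pgrad β x) :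
    EigIn (mobius (fun y => β y + softPlus ε δ (α y - β y)) x) Γ := by
  obtain ⟨hs0, hs1⟩ := deriv_softPlus_mem_Ioo hε hδ (α x - β x)
  set s := deriv (softPlus ε δ) (α x - β x) with hs
  have hK : 0 < Real.exp (-2 * (β x + softPlus ε δ (α x - β x))) * (s * (1 - s)) :=
    mul_pos (Real.exp_pos _) (mul_pos hs0 (sub_pos.2 hs1))
  have hlogistic : s * (1 - s) + ε * (s * (1 - s)) = s * (1 - s) * (1 + ε) := by ring
  rw [mobius_add_comp_sub hα hβ (contDiff_softPlus hδ).contDiffAt hα0 hβ0 rfl hs,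
    deriv_deriv_softPlus hε hδ, ← hs, hlogistic, mul_smul (s * (1 - s)), ← smul_sub, smul_smul]
  exact eigIn_smul_half_norm_sq_sub_vecMulVec hΓ hmem (sub_ne_zero.2 hne) hK

end Interpolation

section Comparison

lemma exists_touching {X : Type*} [TopologicalSpace X] {C : Set X} (hC : IsCompact C)
    {v : X → EReal} (husc : UpperSemicontinuousOn v C) (htop : ∀ x ∈ C, v x < ⊤) {ψ : X → ℝ}
    (hψ : ContinuousOn ψ C) {x₁ : X} (hx₁ : x₁ ∈ C) (hlt : (ψ x₁ : EReal) < v x₁) :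
    ∃ x₀ ∈ C, ∃ c : ℝ, 0 < c ∧ v x₀ = (ψ x₀ + c : ℝ) ∧ ∀ x ∈ C, v x ≤ (ψ x + c : ℝ) := by
  have hdiff : UpperSemicontinuousOn (fun x => v x + (-ψ x : ℝ)) C :=
    husc.add' (continuous_coe_real_ereal.comp_continuousOn hψ.neg).upperSemicontinuousOn
      fun x _ => EReal.continuousAt_add (.inr (EReal.coe_ne_bot _)) (.inr (EReal.coe_ne_top _))
  obtain ⟨x₀, hx₀, hmax⟩ := hdiff.exists_isMaxOn ⟨x₁, hx₁⟩ hC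
  simp only [EReal.coe_neg, ← sub_eq_add_neg, isMaxOn_iff] at hmax
  have hpos : 0 < v x₀ - ψ x₀ := (EReal.sub_pos.2 hlt).trans_le (hmax x₁ hx₁)
  have hv : v x₀ = (v x₀).toReal := by
    refine (EReal.coe_toReal (htop x₀ hx₀).ne fun hbot => ?_).symm
    rw [hbot, EReal.bot_sub] at hpos
    exact not_lt_bot hpos
  refine ⟨x₀, hx₀, (v x₀).toReal - ψ x₀, ?_, by rw [add_sub_cancel, ← hv], fun x hx => ?_⟩
  · rwa [hv, ← EReal.coe_sub, EReal.coe_pos] at hpos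
  · have hle := hmax x hx
    rwa [EReal.sub_le_iff_le_add (.inl (EReal.coe_ne_bot _)) (.inl (EReal.coe_ne_top _)), hv,
      ← EReal.coe_sub, ← EReal.coe_add, add_comm] at hle

lemma frontier_closedBall_diff_ball_subset {X : Type*} [PseudoMetricSpace X] (a : X)
    (r s : ℝ) :
    frontier (closedBall a r \ ball a s) ⊆ sphere a r ∪ sphere a s := by
  rw [sdiff_eq]
  refine (frontier_inter_subset _ _).trans (union_subset_union ?_ ?_)
  · exact inter_subset_left.trans frontier_closedBall_subset_sphere
  · rw [frontier_compl]
    exact inter_subset_right.trans frontier_ball_subset_sphere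

variable {n : ℕ} {Γ : Set (Fin n → ℝ)} {Ω : Set (Euc n)} {v : Euc n → EReal}

lemma SubsolE.not_eigIn_of_touching (hsub : SubsolE Γ Ω v) {x₀ : Euc n} (hx₀ : x₀ ∈ Ω)
    {ψ : Euc n → ℝ} (hψ : ContDiffAt ℝ 2 ψ x₀) (hval : v x₀ = ψ x₀)
    (hle : ∀ᶠ x in 𝓝[Ω] x₀, v x ≤ ψ x) : ¬EigIn (mobius ψ x₀) Γ := by
  obtain ⟨φ, hφ, hφψ⟩ := exists_contDiff_eventuallyEq hψ
  have hφle : ∀ᶠ x in 𝓝[Ω] x₀, v x ≤ φ x := by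
    filter_upwards [hle, nhdsWithin_le_nhds hφψ] with x hx hφx
    rwa [hφx]
  rw [← mobius_congr hφψ]
  rintro ⟨_, hmem⟩
  obtain ⟨_, hcompl⟩ := hsub x₀ hx₀ φ hφ (by rw [hφψ.eq_of_nhds, hval]) hφle
  exact hcompl hmem

lemma SubsolE.le_of_le_on_frontier (hΓ : IsSymmetricCone Γ) (hsub : SubsolE Γ Ω v)
    {C : Set (Euc n)} (hC : IsCompact C) (hCΩ : C ⊆ Ω) (husc : UpperSemicontinuousOn v C)
    (htop : ∀ x ∈ C, v x < ⊤) {ψ : Euc n → ℝ} (hψ : ∀ x ∈ C, ContDiffAt ℝ 2 ψ x)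
    (hsuper : ∀ x ∈ C, EigIn (mobius ψ x) Γ) (hfrontier : ∀ x ∈ frontier C, v x ≤ ψ x) :
    ∀ x ∈ C, v x ≤ ψ x := by
  by_contra! hcon
  obtain ⟨x₁, hx₁, hlt⟩ := hcon
  have hψC : ContinuousOn ψ C := fun x hx => (hψ x hx).continuousAt.continuousWithinAt
  obtain ⟨x₀, hx₀, c, hc, hval, hle⟩ := exists_touching hC husc htop hψC hx₁ hlt
  have hinterior : C ∈ 𝓝 x₀ := by
    by_contra hnot
    have hbd := hfrontier x₀ ⟨subset_closure hx₀, mt mem_interior_iff_mem_nhds.1 hnot⟩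
    rw [hval, EReal.coe_le_coe_iff] at hbd
    linarith
  refine hsub.not_eigIn_of_touching (hCΩ hx₀) ((hψ x₀ hx₀).add contDiffAt_const) hval ?_ ?_
  · exact nhdsWithin_le_nhds (mem_of_superset hinterior hle)
  · rw [mobius_add_const]
    exact (hsuper x₀ hx₀).smul hΓ (Real.exp_pos _)

/-- Subsolutions in a punctured set whose singularity at the origin is strictly weaker than that
of `fundamental n`. -/
structure SubfundamentalSubsol (Γ : Set (Fin n → ℝ)) (Ω : Set (Euc n)) (v : Euc n → EReal) :
    Prop where
  usc : UpperSemicontinuousOn v (Ω \ {0})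
  lt_top : ∀ x ∈ Ω \ {0}, v x < ⊤
  subsol : SubsolE Γ (Ω \ {0}) v
  tendsto : Tendsto (fun x => v x + ((2 * Real.log ‖x‖ : ℝ) : EReal)) (𝓝[Ω \ {0}] 0) (𝓝 ⊥)

namespace SubfundamentalSubsol

variable {ε r : ℝ} {β : Euc n → ℝ}

lemma eventually_lt_fundamental_add (hv : SubfundamentalSubsol Γ Ω v) (c : ℝ) :
    ∀ᶠ x in 𝓝[Ω \ {0}] 0, v x < (fundamental n x + c : ℝ) := by
  filter_upwards [hv.tendsto.eventually_lt_const (EReal.bot_lt_coe c)] with x hx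
  rwa [← EReal.lt_sub_iff_add_lt (.inl (EReal.coe_ne_bot _)) (.inl (EReal.coe_ne_top _)),
    ← EReal.coe_sub, sub_eq_neg_add, ← fundamental_eq] at hx

lemma le_add_softPlus (hv : SubfundamentalSubsol Γ Ω v) (hΓ : IsSymmetricCone Γ) (hε : 0 < ε)
    (hmem : ∀ i₀, Function.update (fun _ => 1) i₀ (-1 - 2 * ε) ∈ Γ) (hr : closedBall 0 r ⊆ Ω)
    (hβ : ∀ x ∈ closedBall 0 r \ {0}, ContDiffAt ℝ 2 β x)
    (hflat : ∀ x ∈ closedBall 0 r \ {0}, mobius β x = 0)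
    (hne : ∀ x ∈ closedBall 0 r \ {0}, pgrad (fundamental n) x ≠ pgrad β x)
    (hsphere : ∀ x ∈ sphere 0 r, v x ≤ β x) {δ : ℝ} (hδ : 0 < δ) {x₁ : Euc n}
    (hx₁ : x₁ ∈ closedBall 0 r \ {0}) :
    v x₁ ≤ (β x₁ + softPlus ε δ (fundamental n x₁ - β x₁) : ℝ) := by
  have hnear : ∀ᶠ x in 𝓝[Ω \ {0}] 0,
      v x ≤ (β x + softPlus ε δ (fundamental n x - β x) : ℝ) := by
    filter_upwards [hv.eventually_lt_fundamental_add (ε⁻¹ * Real.log δ)] with x hx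
    refine hx.le.trans (EReal.coe_le_coe ?_)
    linarith [add_log_lt_softPlus hε hδ (fundamental n x - β x)]
  obtain ⟨t, ht, hball⟩ := Metric.mem_nhdsWithin_iff.1 hnear
  obtain ⟨s, hs, hst⟩ := exists_between (lt_min ht (norm_pos_iff.2 hx₁.2))
  obtain ⟨hs_t, hs_x₁⟩ := lt_min_iff.1 hst
  have hannulus : closedBall (0 : Euc n) r \ ball 0 s ⊆ closedBall 0 r \ {0} :=
    sdiff_subset_sdiff_right (singleton_subset_iff.2 (mem_ball_self hs))
  have hΩ : closedBall (0 : Euc n) r \ ball 0 s ⊆ Ω \ {0} :=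
    hannulus.trans (sdiff_subset_sdiff_left hr)
  refine hv.subsol.le_of_le_on_frontier hΓ ((isCompact_closedBall 0 r).diff isOpen_ball) hΩ
    (hv.usc.mono hΩ) (fun x hx => hv.lt_top x (hΩ hx))
    (ψ := fun x => β x + softPlus ε δ (fundamental n x - β x)) (fun x hx => ?_) (fun x hx => ?_)
    (fun x hx => ?_) x₁ ⟨hx₁.1, by simpa using hs_x₁.le⟩
  · have hx' := hannulus hx
    exact (hβ x hx').add ((contDiff_softPlus hδ).contDiffAt.comp x
      ((contDiffAt_fundamental hx'.2).sub (hβ x hx')))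
  · have hx' := hannulus hx
    exact eigIn_mobius_add_softPlus hΓ hε hmem hδ (contDiffAt_fundamental hx'.2) (hβ x hx')
      (mobius_fundamental hx'.2) (hflat x hx') (hne x hx')
  · rcases frontier_closedBall_diff_ball_subset _ _ _ hx with hxr | hxs
    · exact (hsphere x hxr).trans
        (EReal.coe_le_coe (le_add_of_nonneg_right (softPlus_pos hε hδ _).le))
    · have hclosed : IsClosed (closedBall (0 : Euc n) r \ ball 0 s) :=
        isClosed_closedBall.sdiff isOpen_ball
      exact hball ⟨sphere_subset_ball hs_t hxs, hΩ (hclosed.frontier_subset hx)⟩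

lemma le_of_le_on_sphere (hv : SubfundamentalSubsol Γ Ω v) (hΓ : IsSymmetricCone Γ) (hε : 0 < ε)
    (hmem : ∀ i₀, Function.update (fun _ => 1) i₀ (-1 - 2 * ε) ∈ Γ) (hr : closedBall 0 r ⊆ Ω)
    (hβ : ∀ x ∈ closedBall 0 r \ {0}, ContDiffAt ℝ 2 β x)
    (hflat : ∀ x ∈ closedBall 0 r \ {0}, mobius β x = 0)
    (hne : ∀ x ∈ closedBall 0 r \ {0}, pgrad (fundamental n) x ≠ pgrad β x)
    (hsphere : ∀ x ∈ sphere 0 r, v x ≤ β x) :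
    ∀ x ∈ closedBall 0 r \ {0}, v x ≤ β x := by
  intro x hx
  have hlim : Tendsto (fun δ => ((β x + softPlus ε δ (fundamental n x - β x) : ℝ) : EReal))
      (𝓝[>] 0) (𝓝 (β x)) := by
    refine EReal.tendsto_coe.2 ?_
    simpa only [add_zero] using (tendsto_softPlus ε (fundamental n x - β x)).const_add (β x)
  exact ge_of_tendsto hlim (eventually_mem_nhdsWithin.mono fun δ hδ =>
    hv.le_add_softPlus hΓ hε hmem hr hβ hflat hne hsphere hδ hx)

lemma le_bubble_add_of_le_on_sphere (hv : SubfundamentalSubsol Γ Ω v) (hΓ : IsSymmetricCone Γ)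
    (hε : 0 < ε) (hmem : ∀ i₀, Function.update (fun _ => 1) i₀ (-1 - 2 * ε) ∈ Γ)
    (hr : closedBall 0 r ⊆ Ω) {b : Euc n} (hb : ‖b‖ * r < 1) {M : ℝ}
    (hsphere : ∀ x ∈ sphere 0 r, v x ≤ (bubble b x + M : ℝ)) :
    ∀ x ∈ closedBall 0 r \ {0}, v x ≤ (bubble b x + M : ℝ) := by
  have hbx (x : Euc n) (hx : x ∈ closedBall 0 r \ {0}) : ‖b‖ * ‖x‖ < 1 :=
    (mul_le_mul_of_nonneg_left (mem_closedBall_zero_iff.1 hx.1) (norm_nonneg b)).trans_lt hb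
  refine hv.le_of_le_on_sphere hΓ hε hmem hr (β := fun x => bubble b x + M)
    (fun x hx => (contDiffAt_bubble (hbx x hx)).add contDiffAt_const) (fun x hx => ?_)
    (fun x hx => ?_) hsphere
  · rw [mobius_add_const, mobius_bubble (hbx x hx), smul_zero]
  · rw [pgrad_add_const]
    exact pgrad_fundamental_ne_pgrad_bubble hx.2 (hbx x hx)

lemma limsup_le_of_le_on_sphere (hv : SubfundamentalSubsol Γ Ω v) (hΓ : IsSymmetricCone Γ)
    (hε : 0 < ε) (hmem : ∀ i₀, Function.update (fun _ => 1) i₀ (-1 - 2 * ε) ∈ Γ)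
    (hr0 : 0 < r) (hr : closedBall 0 r ⊆ Ω) {b : Euc n} (hb : ‖b‖ * r < 1) {M : ℝ}
    (hsphere : ∀ x ∈ sphere 0 r, v x ≤ (bubble b x + M : ℝ)) :
    limsup v (𝓝[Ω \ {0}] 0) ≤ M := by
  have hlim : Tendsto (fun x => ((bubble b x + M : ℝ) : EReal)) (𝓝[Ω \ {0}] 0) (𝓝 M) := by
    have hcont : ContinuousAt (bubble b) 0 := (contDiffAt_bubble (by simp)).continuousAt
    have hM := (hcont.tendsto.add_const M).mono_left (nhdsWithin_le_nhds (s := Ω \ {0}))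
    rw [bubble_apply_zero, zero_add] at hM
    exact EReal.tendsto_coe.2 hM
  refine le_of_forall_gt_imp_ge_of_dense fun c hc => limsup_le_of_le (by isBoundedDefault) ?_
  filter_upwards [hlim.eventually_lt_const hc, self_mem_nhdsWithin,
    nhdsWithin_le_nhds (closedBall_mem_nhds 0 hr0)] with x hxc hx0 hxr
  exact (hv.le_bubble_add_of_le_on_sphere hΓ hε hmem hr hb hsphere x ⟨hxr, hx0.2⟩).trans hxc.le

lemma limsup_lt_top (hv : SubfundamentalSubsol Γ Ω v) (hΓ : IsSymmetricCone Γ)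
    (hε : 0 < ε) (hmem : ∀ i₀, Function.update (fun _ => 1) i₀ (-1 - 2 * ε) ∈ Γ)
    (hΩ : Ω ∈ 𝓝 0) : limsup v (𝓝[Ω \ {0}] 0) < ⊤ := by
  obtain ⟨r, hr0, hr⟩ := Metric.nhds_basis_closedBall.mem_iff.1 hΩ
  have hsphere : sphere 0 r ⊆ Ω \ {0} := fun x hx =>
    ⟨hr (sphere_subset_closedBall hx), ne_of_mem_sphere hx hr0.ne'⟩
  obtain ⟨M, hM⟩ : ∃ M : ℝ, ∀ x ∈ sphere 0 r, v x ≤ M := by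
    rcases (sphere (0 : Euc n) r).eq_empty_or_nonempty with hempty | hnonempty
    · exact ⟨0, by simp [hempty]⟩
    · obtain ⟨a, ha, hmax⟩ := (hv.usc.mono hsphere).exists_isMaxOn hnonempty (isCompact_sphere 0 r)
      obtain ⟨M, hM, -⟩ := EReal.lt_iff_exists_real_btwn.1 (hv.lt_top a (hsphere ha))
      exact ⟨M, fun x hx => (hmax hx).trans hM.le⟩
  refine (hv.limsup_le_of_le_on_sphere hΓ hε hmem hr0 hr (b := 0) (M := M) (by simp)
    fun x hx => ?_).trans_lt (EReal.coe_lt_top M)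
  simpa [bubble, quad] using hM x hx

end SubfundamentalSubsol

end Comparison

section Conical

lemma upperSemicontinuousOn_update_limsup {X E : Type*} [TopologicalSpace X] [T1Space X]
    [DecidableEq X] [CompleteLinearOrder E] {v : X → E} {Ω : Set X} {a : X}
    (husc : UpperSemicontinuousOn v (Ω \ {a})) :
    UpperSemicontinuousOn (Function.update v a (limsup v (𝓝[Ω \ {a}] a))) Ω := by
  intro x hx c hc
  by_cases hxa : x = a
  · subst hxa
    rw [Function.update_self] at hc
    have hlt := eventually_nhdsWithin_iff.1 (eventually_lt_of_limsup_lt hc)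
    refine eventually_nhdsWithin_iff.2 (hlt.mono fun y hy hyΩ => ?_)
    change Function.update v x _ y < c
    by_cases hyx : y = x
    · rwa [hyx, Function.update_self]
    · rw [Function.update_of_ne hyx]
      exact hy ⟨hyΩ, hyx⟩
  · rw [Function.update_of_ne hxa] at hc
    have hlt := eventually_nhdsWithin_iff.1 (husc x ⟨hx, hxa⟩ c hc)
    refine eventually_nhdsWithin_iff.2 ?_
    filter_upwards [hlt, isOpen_ne.mem_nhds hxa] with y hy hya hyΩ
    change Function.update v a _ y < c
    rw [Function.update_of_ne hya]
    exact hy ⟨hyΩ, hya⟩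

variable {n : ℕ}

lemma fderiv_eq_zero_of_pgrad_eq_zero {f : Euc n → ℝ} {x : Euc n} (h : pgrad f x = 0) :
    fderiv ℝ f x = 0 := by
  refine ContinuousLinearMap.coe_injective
    ((EuclideanSpace.basisFun (Fin n) ℝ).toBasis.ext fun i => ?_)
  simpa [pgrad] using congrFun h i

lemma exists_sub_mul_norm_le_bubble {η : Euc n → ℝ} (hη : DifferentiableAt ℝ η 0) {e : ℝ}
    (he : 0 < e) : ∃ b, ∀ᶠ x in 𝓝 0, η 0 - η x - e * ‖x‖ ≤ bubble b x := by
  let b : Euc n := WithLp.toLp 2 ((1 / 2 : ℝ) • pgrad η 0)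
  have hbubble : DifferentiableAt ℝ (bubble b) 0 :=
    (contDiffAt_bubble (by simp)).differentiableAt two_ne_zero
  have hcrit : pgrad (fun x => bubble b x + η x) 0 = 0 := by
    rw [pgrad_add hbubble hη, pgrad_bubble_zero]
    funext i
    simp [b]
  have hderiv : HasFDerivAt (fun x => bubble b x + η x) (0 : Euc n →L[ℝ] ℝ) 0 :=
    fderiv_eq_zero_of_pgrad_eq_zero hcrit ▸ (hbubble.add hη).hasFDerivAt
  refine ⟨b, (hderiv.isLittleO.bound he).mono fun x hx => ?_⟩
  simp only [bubble_apply_zero, zero_add, _root_.zero_apply, sub_zero, Real.norm_eq_abs] at hx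
  linarith [neg_le_of_abs_le hx]

variable {Γ : Set (Fin n → ℝ)} {Ω : Set (Euc n)} {v : Euc n → EReal} {ε : ℝ}

lemma SubfundamentalSubsol.limsup_lt_of_le_sub_mul_norm (hv : SubfundamentalSubsol Γ Ω v)
    (hΓ : IsSymmetricCone Γ) (hε : 0 < ε)
    (hmem : ∀ i₀, Function.update (fun _ => 1) i₀ (-1 - 2 * ε) ∈ Γ) (hΩ : Ω ∈ 𝓝 0)
    {η : Euc n → ℝ} (hη : DifferentiableAt ℝ η 0) {e : ℝ} (he : 0 < e) {L : ℝ}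
    (hle : ∀ x ∈ Ω \ {0}, v x ≤ (L + (η 0 - η x - e * ‖x‖) : ℝ)) :
    limsup v (𝓝[Ω \ {0}] 0) < L := by
  obtain ⟨b, hb⟩ := exists_sub_mul_norm_le_bubble hη (half_pos he)
  have hsmall : ∀ᶠ r in 𝓝 (0 : ℝ), ‖b‖ * r < 1 :=
    (continuous_const_mul ‖b‖).continuousAt.tendsto.eventually_lt_const (by simp)
  obtain ⟨r, hr0, hrΩ, hr, hbr⟩ := (eventually_mem_nhdsWithin.and
    (nhdsWithin_le_nhds ((eventually_closedBall_subset hΩ).and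
      ((eventually_closedBall_subset hb).and hsmall))) : ∀ᶠ r in 𝓝[>] (0 : ℝ), _).exists
  rw [mem_Ioi] at hr0
  calc limsup v (𝓝[Ω \ {0}] 0) ≤ (L - e / 2 * r : ℝ) := by
        refine hv.limsup_le_of_le_on_sphere hΓ hε hmem hr0 hrΩ hbr fun x hx => ?_
        have hxr : x ∈ closedBall 0 r := sphere_subset_closedBall hx
        refine (hle x ⟨hrΩ hxr, ne_of_mem_sphere hx hr0.ne'⟩).trans (EReal.coe_le_coe ?_)
        have hbubble : η 0 - η x - e / 2 * ‖x‖ ≤ bubble b x := hr hxr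
        rw [mem_sphere_zero_iff_norm.1 hx] at hbubble ⊢
        linarith
    _ < L := EReal.coe_lt_coe (sub_lt_self L (by positivity))

lemma SubfundamentalSubsol.upperConical (hv : SubfundamentalSubsol Γ Ω v)
    (hΓ : IsSymmetricCone Γ) (hε : 0 < ε)
    (hmem : ∀ i₀, Function.update (fun _ => 1) i₀ (-1 - 2 * ε) ∈ Γ) (hΩ : Ω ∈ 𝓝 0) :
    UpperConical Ω (Function.update v 0 (limsup v (𝓝[Ω \ {0}] 0))) 0 := by
  have htop := hv.limsup_lt_top hΓ hε hmem hΩ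
  rw [UpperConical, LowerConical, Function.update_self, or_iff_not_imp_left]
  refine fun hbot => ⟨hbot, fun e he η hη => ?_⟩
  rw [EReal.neg_eq_top_iff] at hbot
  by_contra! hcone
  have hL := EReal.coe_toReal htop.ne hbot
  set L := (limsup v (𝓝[Ω \ {0}] 0)).toReal
  refine (hv.limsup_lt_of_le_sub_mul_norm hΓ hε hmem hΩ (hη.differentiable (by simp) 0) he
    (L := L) fun x hx => ?_).ne' hL
  have hx_cone := hcone x hx.1
  rw [Function.update_of_ne hx.2, ← hL, sub_zero, ← EReal.coe_neg, ← EReal.coe_sub,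
    ← EReal.coe_add, EReal.le_sub_iff_add_le (.inl (EReal.coe_ne_bot _))
      (.inl (EReal.coe_ne_top _)), ← EReal.coe_add, EReal.le_neg, ← EReal.coe_neg] at hx_cone
  refine hx_cone.trans_eq ?_
  congr 1
  ring

end Conical

theorem upperconical_criterion_general {n : ℕ} {Γ : Set (Fin n → ℝ)} (hopen : IsOpen Γ)
    (hΓ : IsSymmetricCone Γ) (hstar : (fun i => -(lamStar n i)) ∈ Γ) {Ω : Set (Euc n)}
    (hΩ : Ω ∈ 𝓝 0) {v : Euc n → EReal} (hv : SubfundamentalSubsol Γ Ω v) :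
    limsup v (𝓝[Ω \ {0}] 0) < ⊤ ∧
      UpperSemicontinuousOn (Function.update v 0 (limsup v (𝓝[Ω \ {0}] 0))) Ω ∧
      UpperConical Ω (Function.update v 0 (limsup v (𝓝[Ω \ {0}] 0))) 0 := by
  obtain ⟨ε, hε, hmem⟩ := exists_update_mem_of_neg_lamStar_mem hopen hΓ.comp_perm hstar
  exact ⟨hv.limsup_lt_top hΓ hε hmem hΩ, upperSemicontinuousOn_update_limsup hv.usc,
    hv.upperConical hΓ hε hmem hΩ⟩

/-- **Criterion for upperconical behaviour** (Proposition 4.8): for a cone `Γ` satisfying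
condition (C) with `-λ* ∈ Γ`, any viscosity subsolution `v` of `λ(A[v]) ∈ ∂Γ` in `B ∖ {0}`
with `v(x) + 2 log|x| → -∞` as `x → 0` satisfies `limsup_{x→0} v < +∞`; moreover, after
setting `v(0) := limsup_{x→0} v` (possibly `-∞`), `v` is upper semi-continuous on `B` and
upperconical at `0`. -/
theorem upperconical_criterion
    {n : ℕ} (hn : 2 ≤ n) (Γ : Set (Fin n → ℝ)) (hΓ : CondC Γ)
    (hstar : (fun i => -(lamStar n i)) ∈ Γ)
    (B : Set (Euc n)) (hB : B = Metric.ball (0 : Euc n) 1)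
    (v : Euc n → EReal) (husc : UpperSemicontinuousOn v (B \ {0}))
    (htop : ∀ x ∈ B \ {0}, v x < ⊤) (hnebot : ∃ x ∈ B \ {0}, v x ≠ ⊥)
    (hsub : SubsolE Γ (B \ {0}) v)
    (hlim : Filter.Tendsto (fun x => v x + ((2 * Real.log ‖x‖ : ℝ) : EReal))
      (𝓝[B \ {0}] (0 : Euc n)) (𝓝 (⊥ : EReal)))
    (w : Euc n → EReal)
    (hw : w = fun x => if x = (0 : Euc n) then
      Filter.limsup v (𝓝[B \ {0}] (0 : Euc n)) else v x) :
    Filter.limsup v (𝓝[B \ {0}] (0 : Euc n)) < ⊤ ∧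
      UpperSemicontinuousOn w B ∧ UpperConical B w 0 := by
  obtain ⟨-, -, hopen, hperm, hsmul, -⟩ := hΓ
  have hw_update : w = Function.update v 0 (limsup v (𝓝[B \ {0}] 0)) := by
    rw [hw]
    funext x
    rw [Function.update_apply]
  rw [hw_update]
  exact upperconical_criterion_general hopen ⟨hperm, hsmul⟩ hstar
    (hB ▸ ball_mem_nhds 0 one_pos) ⟨husc, htop, hsub, hlim⟩
end
end

section
/- Let n ≥ 2, let Γ ⊂ ℝⁿ satisfy condition (C) with λ* = (1,−1,…,−1) ∈ Γ, and let R > 0. (a) If v is an upper semi-continuous radially symmetric function (v(x) = v(|x|)) on {|x| > R} satisfying λ(A[v]) ∈ ℝⁿ∖Γ there in the viscosity sense, then r ↦ v(r) is non-increasing on (R,∞). (b) If v is an upper semi-continuous radially symmetric function on {0 < |x| < R} satisfying λ(A[v]) ∈ ℝⁿ∖Γ there in the viscosity sense, then r ↦ v(r) + 2·log r is non-decreasing on (0,R). -/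
open Filter Topology MeasureTheory Metric Set
open scoped BigOperators ENNReal NNReal

noncomputable section

/-!
For a radial function `φ = f (log r)` the eigenvalues of `A[φ]` are proportional to
`(a - f'', -a, …, -a)` with `a = f' (f' + 2) / 2`. The solutions of `f'' = 2κa` are given by
`exp (-κ f) = A + B r ^ (2κ)`, up to an additive constant in `f`, and `a > 0` exactly when
`A B < 0`. The eigenvalues are then a positive multiple of `(1 - 2κ, -1, …, -1)`, which lies in the
open cone `Γ` for small `κ > 0`, so no such `φ` touches a subsolution `v` from above. Hence
`v + κ⁻¹ log (A + B r ^ (2κ))` attains its maximum over a closed annulus on the boundary.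

For the weight `1 - ε r ^ (2κ)` a large outer sphere contributes `-∞`, for the weight
`r ^ (2κ) - ε` a small inner sphere does; letting `ε → 0` compares `v`, respectively `v + 2 log r`,
with its supremum over the remaining sphere.
-/

section Spectrum

open Polynomial

lemma exists_perm_eq_comp_of_map_univ_eq {ι γ : Type*} [Fintype ι] {f g : ι → γ}
    (h : Finset.univ.val.map f = Finset.univ.val.map g) : ∃ σ : Equiv.Perm ι, f = g ∘ σ := by
  classical
  have hfiber (c : γ) : Nonempty ({i // f i = c} ≃ {i // g i = c}) := by
    refine ⟨Fintype.equivOfCardEq ?_⟩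
    simpa only [Multiset.count_map, Fintype.card_subtype, Finset.card_def, Finset.filter_val,
      eq_comm (a := c)] using congrArg (Multiset.count c) h
  exact ⟨Equiv.ofFiberEquiv fun c => (hfiber c).some,
    funext fun i => (Equiv.ofFiberEquiv_map _ i).symm⟩

variable {ι : Type*} [Fintype ι] [DecidableEq ι]

lemma exists_perm_eigenvalues_eq_comp {M : Matrix ι ι ℝ} (hM : M.IsHermitian)
    {lam : ι → ℝ} (h : M.charpoly = ∏ i, (X - C (lam i))) :
    ∃ σ : Equiv.Perm ι, hM.eigenvalues = lam ∘ σ := by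
  apply exists_perm_eq_comp_of_map_univ_eq
  have hroots := hM.roots_charpoly_eq_eigenvalues
  rw [h, roots_prod _ _ (Finset.prod_ne_zero_iff.2 fun i _ => X_sub_C_ne_zero _)] at hroots
  simpa using hroots.symm

lemma charpoly_smul_one_add_smul_vecMulVec {R : Type*} [CommRing R] (α β : R) (u w : ι → R)
    (i : ι) :
    (α • (1 : Matrix ι ι R) + β • Matrix.vecMulVec u w).charpoly =
      ∏ j, (X - C (Function.update (fun _ => α) i (α + β * (u ⬝ᵥ w)) j)) := by
  have hshift : α • (1 : Matrix ι ι R) + β • Matrix.vecMulVec u w =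
      Matrix.vecMulVec (β • u) w - Matrix.scalar ι (-α) := by
    rw [map_neg, sub_neg_eq_add, Matrix.smul_vecMulVec, add_comm, Matrix.scalar_apply,
      Matrix.smul_one_eq_diagonal]
  have hcard : Fintype.card ι = Fintype.card ι - 1 + 1 :=
    (Nat.sub_add_cancel (Fintype.card_pos_iff.2 ⟨i⟩)).symm
  have hprod : ∏ j, (X - C (Function.update (fun _ => α) i (α + β * (u ⬝ᵥ w)) j)) =
      (X - C (α + β * (u ⬝ᵥ w))) * (X - C α) ^ (Fintype.card ι - 1) := by
    rw [← Finset.mul_prod_erase _ _ (Finset.mem_univ i), Function.update_self,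
      Finset.prod_congr rfl (g := fun _ => X - C α), Finset.prod_const,
      Finset.card_erase_of_mem (Finset.mem_univ i), Finset.card_univ]
    intro j hj
    rw [Function.update_of_ne (Finset.ne_of_mem_erase hj)]
  rw [hshift, Matrix.charpoly_sub_scalar, Matrix.charpoly_vecMulVec, hprod, hcard]
  simp only [smul_dotProduct, smul_eq_mul, add_tsub_cancel_right, smul_eq_C_mul, map_mul, map_neg,
    sub_comp, pow_comp, X_comp, mul_comp, C_comp, map_add]
  ring

lemma EigIn.mem_of_charpoly_eq {n : ℕ} {M : Matrix (Fin n) (Fin n) ℝ} {S : Set (Fin n → ℝ)}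
    (hS : ∀ σ : Equiv.Perm (Fin n), ∀ lam ∈ S, lam ∘ σ ∈ S) (h : EigIn M S) {lam : Fin n → ℝ}
    (hlam : M.charpoly = ∏ i, (X - C (lam i))) : lam ∈ S := by
  obtain ⟨hM, hmem⟩ := h
  obtain ⟨σ, hσ⟩ := exists_perm_eigenvalues_eq_comp hM hlam
  simpa [hσ, Function.comp_assoc] using hS σ⁻¹ _ hmem

end Spectrum

section RadialFunctions

variable {n : ℕ} {x : Euc n} {g : ℝ → ℝ}

lemma pgrad_comp_norm_sq {p : ℝ} (hg : HasDerivAt g p (‖x‖ ^ 2)) (i : Fin n) :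
    pgrad (fun y => g (‖y‖ ^ 2)) x i = p * (2 * x i) := by
  have h : HasFDerivAt (fun y : Euc n => g (‖y‖ ^ 2)) (p • (2 • innerSL ℝ x)) x :=
    hg.comp_hasFDerivAt x (hasStrictFDerivAt_norm_sq x).hasFDerivAt
  rw [pgrad, h.fderiv]
  simp [EuclideanSpace.inner_single_right]

lemma phess_comp_norm_sq {p : ℝ → ℝ} {s : ℝ} (hg : ∀ᶠ q in 𝓝 (‖x‖ ^ 2), HasDerivAt g (p q) q)
    (hp : HasDerivAt p s (‖x‖ ^ 2)) (i j : Fin n) :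
    phess (fun y => g (‖y‖ ^ 2)) x i j =
      s * (4 * (x i * x j)) + p (‖x‖ ^ 2) * (2 * if i = j then 1 else 0) := by
  have hgrad : (fun y => fderiv ℝ (fun z : Euc n => g (‖z‖ ^ 2)) y (EuclideanSpace.single j 1))
      =ᶠ[𝓝 x] fun y => p (‖y‖ ^ 2) * (2 * y j) := by
    filter_upwards [(continuous_norm.pow 2).continuousAt.eventually hg] with y hy
    exact pgrad_comp_norm_sq hy j
  have hcoord : HasFDerivAt (fun y : Euc n => 2 * y j)
      ((2 : ℝ) • (EuclideanSpace.proj j : Euc n →L[ℝ] ℝ)) x :=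
    (EuclideanSpace.proj j : Euc n →L[ℝ] ℝ).hasFDerivAt.const_mul 2
  have hp' : HasFDerivAt (fun y : Euc n => p (‖y‖ ^ 2)) (s • (2 • innerSL ℝ x)) x :=
    hp.comp_hasFDerivAt x (hasStrictFDerivAt_norm_sq x).hasFDerivAt
  rw [phess, hgrad.fderiv_eq, (hp'.fun_mul hcoord).fderiv]
  simp only [add_apply, smul_apply, PiLp.proj_apply, PiLp.single_apply, eq_comm, smul_eq_mul,
    mul_ite, mul_one, mul_zero, coe_innerSL_apply, EuclideanSpace.inner_single_right,
    Real.ringHom_apply, one_mul, nsmul_eq_mul, Nat.cast_ofNat]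
  ring

lemma mobius_comp_norm_sq {p : ℝ → ℝ} {s : ℝ} (hg : ∀ᶠ q in 𝓝 (‖x‖ ^ 2), HasDerivAt g (p q) q)
    (hp : HasDerivAt p s (‖x‖ ^ 2)) :
    mobius (fun y => g (‖y‖ ^ 2)) x = Real.exp (-2 * g (‖x‖ ^ 2)) •
      ((-2 * p (‖x‖ ^ 2) * (1 + p (‖x‖ ^ 2) * ‖x‖ ^ 2)) • (1 : Matrix (Fin n) (Fin n) ℝ) +
        (4 * (p (‖x‖ ^ 2) ^ 2 - s)) • Matrix.vecMulVec x.ofLp x.ofLp) := by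
  ext i j
  simp only [mobius, Matrix.smul_apply, Matrix.of_apply, Matrix.add_apply, Matrix.one_apply,
    Matrix.vecMulVec_apply, smul_eq_mul, phess_comp_norm_sq hg hp,
    pgrad_comp_norm_sq hg.self_of_nhds, mul_pow, ← Finset.mul_sum,
    ← EuclideanSpace.real_norm_sq_eq]
  ring

end RadialFunctions

lemma mobius_congr_s14 {n : ℕ} {φ ψ : Euc n → ℝ} {x : Euc n} (h : φ =ᶠ[𝓝 x] ψ) :
    mobius φ x = mobius ψ x := by
  have hfderiv := h.fderiv (𝕜 := ℝ)
  have hphess (i j : Fin n) : phess φ x i j = phess ψ x i j := by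
    have : (fun y => fderiv ℝ φ y (EuclideanSpace.single j 1)) =ᶠ[𝓝 x]
        fun y => fderiv ℝ ψ y (EuclideanSpace.single j 1) := by
      filter_upwards [hfderiv] with y hy
      rw [hy]
    rw [phess, phess, this.fderiv_eq]
  simp only [mobius, hphess, pgrad, h.eq_of_nhds, hfderiv.eq_of_nhds]

lemma exists_contDiff_eventuallyEq_s14 {E F : Type*} [NormedAddCommGroup E] [NormedSpace ℝ E]
    [HasContDiffBump E] [NormedAddCommGroup F] [NormedSpace ℝ F] {k : ℕ} {f : E → F} {x₀ : E}
    (hf : ContDiffAt ℝ k f x₀) : ∃ g : E → F, ContDiff ℝ k g ∧ g =ᶠ[𝓝 x₀] f := by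
  obtain ⟨ε, hε, hball⟩ := eventually_nhds_iff_ball.1 (hf.eventually (by simp))
  let χ : ContDiffBump x₀ := ⟨ε / 4, ε / 2, by linarith, by linarith⟩
  refine ⟨fun x => χ x • f x, contDiff_iff_contDiffAt.2 fun x => ?_, ?_⟩
  · by_cases hx : x ∈ tsupport χ
    · rw [χ.tsupport_eq] at hx
      exact χ.contDiffAt.smul (hball x (closedBall_subset_ball (half_lt_self hε) hx))
    · refine (contDiffAt_const (c := 0)).congr_of_eventuallyEq ?_
      filter_upwards [notMem_tsupport_iff_eventuallyEq.1 hx] with y hy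
      simp [hy]
  · filter_upwards [χ.eventuallyEq_one] with x hx
    simp [hx]

lemma SubsolE.eigIn_of_contDiffAt {n : ℕ} {Γ : Set (Fin n → ℝ)} {Ω : Set (Euc n)}
    {v : Euc n → EReal} (hv : SubsolE Γ Ω v) {x₀ : Euc n} (hx₀ : x₀ ∈ Ω) {φ : Euc n → ℝ}
    (hφ : ContDiffAt ℝ 2 φ x₀) (heq : (φ x₀ : EReal) = v x₀)
    (hle : ∀ᶠ x in 𝓝[Ω] x₀, v x ≤ (φ x : EReal)) : EigIn (mobius φ x₀) Γᶜ := by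
  obtain ⟨ψ, hψ, hψφ⟩ := exists_contDiff_eventuallyEq_s14 hφ
  rw [← mobius_congr_s14 hψφ]
  refine hv x₀ hx₀ ψ hψ (hψφ.eq_of_nhds ▸ heq) ?_
  filter_upwards [hle, hψφ.filter_mono nhdsWithin_le_nhds] with x hx hψx
  rwa [hψx]

section Barrier

/-- The eigenvalue tuple `(1 - 2κ, -1, …, -1)`, a perturbation of `λ*`. -/
def tiltedStar (n : ℕ) (κ : ℝ) : Fin n → ℝ := fun i => if i.val = 0 then 1 - 2 * κ else -1

lemma exists_tiltedStar_mem {n : ℕ} {Γ : Set (Fin n → ℝ)} (hopen : IsOpen Γ)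
    (hstar : lamStar n ∈ Γ) : ∃ κ > 0, tiltedStar n κ ∈ Γ := by
  have hcont : Continuous (tiltedStar n) := by
    refine continuous_pi fun i => ?_
    unfold tiltedStar
    split_ifs <;> fun_prop
  have hzero : tiltedStar n 0 = lamStar n := by
    ext i
    simp [tiltedStar, lamStar]
  have hnear : ∀ᶠ κ in 𝓝[>] (0 : ℝ), tiltedStar n κ ∈ Γ :=
    hcont.continuousAt.continuousWithinAt.eventually (hopen.mem_nhds (hzero ▸ hstar))
  exact (eventually_mem_nhdsWithin.and hnear).exists

/-- The weight `W(r) = A + B r ^ (2κ)` of the barriers, written in terms of `r ^ 2` because radial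
functions are differentiated through `‖x‖ ^ 2`. -/
def barrierWeight (A B κ r : ℝ) : ℝ := A + B * (r ^ 2) ^ κ

/-- The radial function `φ` with `exp (κ φ) W = exp (κ c)`, where `W = barrierWeight A B κ` is
positive. -/
def barrier {n : ℕ} (A B κ c : ℝ) (x : Euc n) : ℝ :=
  c - 1 / κ * Real.log (barrierWeight A B κ ‖x‖)

variable {n : ℕ} {A B κ : ℝ} {x : Euc n}

lemma continuous_barrierWeight (hκ : 0 ≤ κ) : Continuous (barrierWeight A B κ) := by
  have : Continuous fun r : ℝ => (r ^ 2) ^ κ := (continuous_pow 2).rpow_const fun _ => Or.inr hκ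
  unfold barrierWeight
  fun_prop

lemma contDiffAt_barrier {c : ℝ} {k : WithTop ℕ∞} (hx : x ≠ 0)
    (hW : 0 < barrierWeight A B κ ‖x‖) : ContDiffAt ℝ k (barrier A B κ c) x := by
  have hpow : ContDiffAt ℝ k (fun y : Euc n => (‖y‖ ^ 2) ^ κ) x :=
    (contDiff_norm_sq ℝ).contDiffAt.rpow_const_of_ne (by positivity)
  exact contDiffAt_const.sub (contDiffAt_const.mul
    ((contDiffAt_const.add (contDiffAt_const.mul hpow)).log hW.ne'))

lemma hasDerivAt_sub_log_add_mul_rpow {q : ℝ} (hκ : κ ≠ 0) (c : ℝ) (hq : 0 < q)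
    (hW : 0 < A + B * q ^ κ) :
    HasDerivAt (fun q => c - 1 / κ * Real.log (A + B * q ^ κ))
      (-(B * q ^ (κ - 1) / (A + B * q ^ κ))) q := by
  have hweight : HasDerivAt (fun q => A + B * q ^ κ) (B * (κ * q ^ (κ - 1))) q :=
    ((Real.hasDerivAt_rpow_const (Or.inl hq.ne')).const_mul B).const_add A
  refine (((hweight.log hW.ne').const_mul (1 / κ)).const_sub c).congr_deriv ?_
  field_simp

lemma hasDerivAt_neg_rpow_div_add_mul_rpow {q : ℝ} (hq : 0 < q) (hW : 0 < A + B * q ^ κ) :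
    HasDerivAt (fun q => -(B * q ^ (κ - 1) / (A + B * q ^ κ)))
      ((B * q ^ κ / (q * (A + B * q ^ κ))) ^ 2 +
        (1 - κ) * A * B * q ^ κ / (q * (A + B * q ^ κ)) ^ 2) q := by
  have hweight : HasDerivAt (fun q => A + B * q ^ κ) (B * (κ * q ^ (κ - 1))) q :=
    ((Real.hasDerivAt_rpow_const (Or.inl hq.ne')).const_mul B).const_add A
  have hnum : HasDerivAt (fun q => B * q ^ (κ - 1)) (B * ((κ - 1) * q ^ (κ - 1 - 1))) q :=
    (Real.hasDerivAt_rpow_const (Or.inl hq.ne')).const_mul B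
  refine (hnum.div hweight hW.ne').neg.congr_deriv ?_
  rw [Real.rpow_sub_one hq.ne', Real.rpow_sub_one hq.ne']
  field_simp
  ring

lemma exists_mobius_barrier_eq (hκ : κ ≠ 0) (c : ℝ) (hAB : A * B < 0) (hx : x ≠ 0)
    (hW : 0 < barrierWeight A B κ ‖x‖) :
    ∃ t > 0, mobius (barrier A B κ c) x = (-t) • (1 : Matrix (Fin n) (Fin n) ℝ) +
      ((2 - 2 * κ) * t / ‖x‖ ^ 2) • Matrix.vecMulVec x.ofLp x.ofLp := by
  have hq : 0 < ‖x‖ ^ 2 := by positivity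
  have hnear : ∀ᶠ q in 𝓝 (‖x‖ ^ 2), 0 < q ∧ 0 < A + B * q ^ κ :=
    (eventually_gt_nhds hq).and <|
      (ContinuousAt.tendsto (f := fun q => A + B * q ^ κ)
        (by fun_prop (disch := simp [hx]))).eventually_const_lt hW
  have hmobius := mobius_comp_norm_sq (x := x)
    (hnear.mono fun q h => hasDerivAt_sub_log_add_mul_rpow hκ c h.1 h.2)
    (hasDerivAt_neg_rpow_div_add_mul_rpow hq hW)
  refine ⟨Real.exp (-2 * barrier A B κ c x) *
    (-2 * (A * B) * (‖x‖ ^ 2) ^ κ / (‖x‖ ^ 2 * barrierWeight A B κ ‖x‖ ^ 2)), ?_,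
    hmobius.trans ?_⟩
  · have : 0 < -2 * (A * B) := by linarith
    positivity
  · unfold barrier barrierWeight at *
    rw [smul_add, smul_smul, smul_smul, Real.rpow_sub_one hq.ne']
    congr 2 <;> field_simp <;> ring

lemma exists_charpoly_mobius_barrier_eq (hκ : κ ≠ 0) (c : ℝ) (hAB : A * B < 0) (hx : x ≠ 0)
    (hW : 0 < barrierWeight A B κ ‖x‖) :
    ∃ t : ℝ, 0 < t ∧ (mobius (barrier A B κ c) x).charpoly =
      ∏ i, (Polynomial.X - Polynomial.C ((t • tiltedStar n κ) i)) := by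
  obtain ⟨t, ht, hmobius⟩ := exists_mobius_barrier_eq hκ c hAB hx hW
  have hn : 0 < n := Nat.pos_of_ne_zero fun h => hx (by subst h; exact Subsingleton.elim _ _)
  have hnorm : x.ofLp ⬝ᵥ x.ofLp = ‖x‖ ^ 2 := by
    rw [EuclideanSpace.real_norm_sq_eq]
    simp only [dotProduct, sq]
  refine ⟨t, ht, ?_⟩
  rw [hmobius, charpoly_smul_one_add_smul_vecMulVec _ _ _ _ ⟨0, hn⟩, hnorm]
  refine Finset.prod_congr rfl fun i _ => ?_
  congr 2
  by_cases hi : i = ⟨0, hn⟩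
  · subst hi
    have : ‖x‖ ^ 2 ≠ 0 := by positivity
    simp only [Function.update_self, Pi.smul_apply, tiltedStar, if_true, smul_eq_mul]
    field_simp
    ring
  · have hi' : i.val ≠ 0 := fun h => hi (Fin.ext h)
    simp [hi, hi', tiltedStar]

lemma SubsolE.not_eventually_le_barrier {Γ : Set (Fin n → ℝ)} {Ω : Set (Euc n)} {v : Euc n → EReal}
    (hv : SubsolE Γ Ω v) (hsymm : ∀ σ : Equiv.Perm (Fin n), ∀ lam ∈ Γ, lam ∘ σ ∈ Γ)
    (hΓ : ∀ t : ℝ, 0 < t → t • tiltedStar n κ ∈ Γ) (hκ : κ ≠ 0) {c : ℝ} (hAB : A * B < 0)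
    (hxΩ : x ∈ Ω) (hx : x ≠ 0) (hW : 0 < barrierWeight A B κ ‖x‖)
    (heq : (barrier A B κ c x : EReal) = v x) :
    ¬ ∀ᶠ y in 𝓝[Ω] x, v y ≤ (barrier A B κ c y : EReal) := by
  intro hle
  obtain ⟨t, ht, hcharpoly⟩ := exists_charpoly_mobius_barrier_eq hκ c hAB hx hW
  have hsymm' (σ : Equiv.Perm (Fin n)) : ∀ lam ∈ Γᶜ, lam ∘ σ ∈ Γᶜ := fun lam hlam h =>
    hlam (by simpa [Function.comp_assoc] using hsymm σ⁻¹ _ h)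
  exact (hv.eigIn_of_contDiffAt hxΩ (contDiffAt_barrier hx hW) heq hle).mem_of_charpoly_eq
    hsymm' hcharpoly (hΓ t ht)

lemma le_sub_coe_iff_add_coe_le {a c : EReal} {b : ℝ} : a ≤ c - b ↔ a + b ≤ c :=
  EReal.le_sub_iff_add_le (Or.inl (EReal.coe_ne_bot b)) (Or.inl (EReal.coe_ne_top b))

/-- The function `-barrier A B κ 0 = κ⁻¹ log W` of the radius, extended by `-∞` to the radii where
`W = barrierWeight A B κ` is nonpositive. -/
def logWeight (A B κ r : ℝ) : EReal :=
  ENNReal.log (ENNReal.ofReal (barrierWeight A B κ r) ^ (1 / κ))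

lemma logWeight_of_pos {r : ℝ} (hW : 0 < barrierWeight A B κ r) :
    logWeight A B κ r = (1 / κ * Real.log (barrierWeight A B κ r) : ℝ) := by
  rw [logWeight, ENNReal.log_rpow, ENNReal.log_ofReal_of_pos hW, EReal.coe_mul]

lemma logWeight_of_nonpos (hκ : 0 < κ) {r : ℝ} (hW : barrierWeight A B κ r ≤ 0) :
    logWeight A B κ r = ⊥ := by
  rw [logWeight, ENNReal.ofReal_of_nonpos hW, ENNReal.zero_rpow_of_pos (by positivity),
    ENNReal.log_zero]

lemma logWeight_ne_top (hκ : 0 ≤ κ) (r : ℝ) : logWeight A B κ r ≠ ⊤ := by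
  simp [logWeight, ENNReal.rpow_eq_top_iff, hκ]

lemma continuous_logWeight (hκ : 0 ≤ κ) : Continuous (logWeight A B κ) :=
  ENNReal.continuous_log.comp <| ENNReal.continuous_rpow_const.comp <|
    ENNReal.continuous_ofReal.comp (continuous_barrierWeight hκ)

lemma SubsolE.not_isLocalMaxOn_add_logWeight {Γ : Set (Fin n → ℝ)} {Ω : Set (Euc n)}
    {v : Euc n → EReal} (hv : SubsolE Γ Ω v)
    (hsymm : ∀ σ : Equiv.Perm (Fin n), ∀ lam ∈ Γ, lam ∘ σ ∈ Γ)
    (hΓ : ∀ t : ℝ, 0 < t → t • tiltedStar n κ ∈ Γ) (hκ : 0 < κ) (hAB : A * B < 0)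
    (hxΩ : x ∈ Ω) (hx : x ≠ 0) (htop : v x ≠ ⊤) (hbot : v x + logWeight A B κ ‖x‖ ≠ ⊥) :
    ¬ IsLocalMaxOn (fun y => v y + logWeight A B κ ‖y‖) Ω x := by
  intro hmax
  have hW : 0 < barrierWeight A B κ ‖x‖ := by
    by_contra! h
    exact hbot (by rw [logWeight_of_nonpos hκ h, EReal.add_bot])
  obtain ⟨a, ha⟩ : ∃ a : ℝ, (a : EReal) = v x :=
    ⟨_, EReal.coe_toReal htop fun h => hbot (by rw [h, EReal.bot_add])⟩
  have hWnear : ∀ᶠ y in 𝓝[Ω] x, 0 < barrierWeight A B κ ‖y‖ :=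
    (((continuous_barrierWeight hκ.le).comp continuous_norm).tendsto x).eventually_const_lt hW
      |>.filter_mono nhdsWithin_le_nhds
  refine hv.not_eventually_le_barrier hsymm hΓ hκ.ne' hAB hxΩ hx hW
    (c := a + 1 / κ * Real.log (barrierWeight A B κ ‖x‖)) (by simp [barrier, ha]) ?_
  filter_upwards [hmax, hWnear] with y hy hWy
  rw [logWeight_of_pos hW, logWeight_of_pos hWy, ← ha, ← EReal.coe_add] at hy
  rw [barrier, EReal.coe_sub]
  exact le_sub_coe_iff_add_coe_le.2 hy

end Barrier

section MaximumPrinciple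

variable {n : ℕ} {Γ : Set (Fin n → ℝ)} {Ω : Set (Euc n)} {v : Euc n → EReal} {A B κ : ℝ}

lemma upperSemicontinuousOn_add_logWeight (husc : UpperSemicontinuousOn v Ω)
    (hfin : ∀ x ∈ Ω, v x < ⊤) (hκ : 0 ≤ κ) :
    UpperSemicontinuousOn (fun x => v x + logWeight A B κ ‖x‖) Ω :=
  husc.add' ((continuous_logWeight hκ).comp continuous_norm).continuousOn.upperSemicontinuousOn
    fun x hx => EReal.continuousAt_add (Or.inl (hfin x hx).ne) (Or.inr (logWeight_ne_top hκ _))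

lemma SubsolE.add_logWeight_le_of_annulus (hv : SubsolE Γ Ω v)
    (hsymm : ∀ σ : Equiv.Perm (Fin n), ∀ lam ∈ Γ, lam ∘ σ ∈ Γ)
    (hΓ : ∀ t : ℝ, 0 < t → t • tiltedStar n κ ∈ Γ) (hκ : 0 < κ) (hAB : A * B < 0)
    (husc : UpperSemicontinuousOn v Ω) (hfin : ∀ x ∈ Ω, v x < ⊤) {r ρ : ℝ} (hr : 0 ≤ r)
    (hΩ : {x : Euc n | ‖x‖ ∈ Icc r ρ} ⊆ Ω) {m : EReal}
    (hinner : ∀ x : Euc n, ‖x‖ = r → v x + logWeight A B κ ‖x‖ ≤ m)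
    (houter : ∀ x : Euc n, ‖x‖ = ρ → v x + logWeight A B κ ‖x‖ ≤ m)
    {x : Euc n} (hx : ‖x‖ ∈ Icc r ρ) : v x + logWeight A B κ ‖x‖ ≤ m := by
  set K : Set (Euc n) := {x | ‖x‖ ∈ Icc r ρ}
  have hK : IsCompact K := (isCompact_closedBall 0 ρ).of_isClosed_subset
    (isClosed_Icc.preimage continuous_norm) fun z hz => by simpa using hz.2
  obtain ⟨x₀, hx₀, hmax⟩ := UpperSemicontinuousOn.exists_isMaxOn ⟨x, hx⟩ hK
    ((upperSemicontinuousOn_add_logWeight husc hfin hκ.le).mono hΩ)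
  by_contra! hlt
  have hlt₀ : m < v x₀ + logWeight A B κ ‖x₀‖ := hlt.trans_le (hmax hx)
  have hinterior : ‖x₀‖ ∈ Ioo r ρ :=
    ⟨hx₀.1.lt_of_ne' fun h => (hinner x₀ h).not_gt hlt₀,
      hx₀.2.lt_of_ne fun h => (houter x₀ h).not_gt hlt₀⟩
  have hK₀ : K ∈ 𝓝 x₀ := continuous_norm.continuousAt (Icc_mem_nhds hinterior.1 hinterior.2)
  exact hv.not_isLocalMaxOn_add_logWeight hsymm hΓ hκ hAB (hΩ hx₀)
    (norm_pos_iff.1 (hr.trans_lt hinterior.1)) (hfin _ (hΩ hx₀)).ne (bot_le.trans_lt hlt₀).ne'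
    ((hmax.isLocalMax hK₀).on Ω)

/-- The supremum of `v` over the sphere of radius `r` about the origin. -/
def sphereSup (v : Euc n → EReal) (r : ℝ) : EReal := ⨆ x ∈ sphere (0 : Euc n) r, v x

lemma le_sphereSup_norm (v : Euc n → EReal) (x : Euc n) : v x ≤ sphereSup v ‖x‖ :=
  le_iSup₂_of_le x (by simp) le_rfl

lemma sphereSup_le_iff {r : ℝ} {c : EReal} :
    sphereSup v r ≤ c ↔ ∀ x : Euc n, ‖x‖ = r → v x ≤ c := by
  simp [sphereSup]

lemma sphereSup_norm (hv : ∀ x y : Euc n, ‖x‖ = ‖y‖ → v x = v y) (x : Euc n) :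
    sphereSup v ‖x‖ = v x :=
  le_antisymm (sphereSup_le_iff.2 fun y hy => (hv y x hy).le) (le_sphereSup_norm v x)

lemma logWeight_one_zero (κ r : ℝ) : logWeight 1 0 κ r = 0 := by
  rw [logWeight_of_pos (by simp [barrierWeight])]
  simp [barrierWeight]

lemma logWeight_zero_one (hκ : κ ≠ 0) {r : ℝ} (hr : 0 < r) :
    logWeight 0 1 κ r = (2 * Real.log r : ℝ) := by
  have hW : barrierWeight 0 1 κ r = (r ^ 2) ^ κ := by simp [barrierWeight]
  rw [logWeight_of_pos (by rw [hW]; positivity), hW, Real.log_rpow (by positivity), Real.log_pow]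
  congr 1
  push_cast
  field_simp

lemma tendsto_add_logWeight {ι : Type*} {l : Filter ι} {a b : ι → ℝ} (ha : Tendsto a l (𝓝 A))
    (hb : Tendsto b l (𝓝 B)) (hκ : 0 ≤ κ) {r : ℝ} (hW : 0 < barrierWeight A B κ r) (c : EReal) :
    Tendsto (fun i => c + logWeight (a i) (b i) κ r) l (𝓝 (c + logWeight A B κ r)) := by
  have hlim : Tendsto (fun i => logWeight (a i) (b i) κ r) l (𝓝 (logWeight A B κ r)) :=
    (ENNReal.continuous_log.tendsto _).comp <| (ENNReal.continuous_rpow_const.tendsto _).comp <|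
      ENNReal.tendsto_ofReal (ha.add (hb.mul_const _))
  have hbot : logWeight A B κ r ≠ ⊥ := by
    rw [logWeight_of_pos hW]
    exact EReal.coe_ne_bot _
  exact (EReal.continuousAt_add (Or.inr hbot) (Or.inr (logWeight_ne_top hκ _))).tendsto.comp
    (tendsto_const_nhds.prodMk_nhds hlim)

lemma SubsolE.le_sphereSup (hv : SubsolE Γ Ω v)
    (hsymm : ∀ σ : Equiv.Perm (Fin n), ∀ lam ∈ Γ, lam ∘ σ ∈ Γ)
    (hΓ : ∀ t : ℝ, 0 < t → t • tiltedStar n κ ∈ Γ) (hκ : 0 < κ)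
    (husc : UpperSemicontinuousOn v Ω) (hfin : ∀ x ∈ Ω, v x < ⊤) {r : ℝ} (hr : 0 ≤ r)
    (hΩ : {x : Euc n | r ≤ ‖x‖} ⊆ Ω) {y : Euc n} (hy : r ≤ ‖y‖) : v y ≤ sphereSup v r := by
  have hweighted {ε : ℝ} (hε : 0 < ε) :
      v y + logWeight 1 (-ε) κ ‖y‖ ≤ sphereSup v r + logWeight 1 (-ε) κ r := by
    have hpow : Tendsto (fun ρ : ℝ => (ρ ^ 2) ^ κ) atTop atTop :=
      (tendsto_rpow_atTop hκ).comp (tendsto_pow_atTop two_ne_zero)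
    obtain ⟨ρ, hρ, hyρ⟩ :=
      ((hpow.eventually_ge_atTop (1 / ε)).and (eventually_ge_atTop ‖y‖)).exists
    have hWρ : barrierWeight 1 (-ε) κ ρ ≤ 0 := by
      have := (div_le_iff₀' hε).1 hρ
      unfold barrierWeight
      linarith
    refine hv.add_logWeight_le_of_annulus hsymm hΓ hκ (by linarith) husc hfin hr
      (fun z hz => hΩ hz.1) (fun z hz => ?_) (fun z hz => ?_) ⟨hy, hyρ⟩
    · rw [← hz]
      exact add_le_add_left (le_sphereSup_norm v z) _
    · rw [hz, logWeight_of_nonpos hκ hWρ, EReal.add_bot]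
      exact bot_le
  have hlim (s : ℝ) (c : EReal) :
      Tendsto (fun ε => c + logWeight 1 (-ε) κ s) (𝓝[>] 0) (𝓝 (c + logWeight 1 0 κ s)) :=
    tendsto_add_logWeight tendsto_const_nhds
      ((continuous_neg.tendsto' (0 : ℝ) 0 neg_zero).mono_left nhdsWithin_le_nhds) hκ.le
      (by simp [barrierWeight]) c
  simpa [logWeight_one_zero] using le_of_tendsto_of_tendsto (hlim ‖y‖ (v y))
    (hlim r (sphereSup v r)) (eventually_mem_nhdsWithin.mono fun ε hε => hweighted hε)

lemma SubsolE.add_log_le_sphereSup (hv : SubsolE Γ Ω v)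
    (hsymm : ∀ σ : Equiv.Perm (Fin n), ∀ lam ∈ Γ, lam ∘ σ ∈ Γ)
    (hΓ : ∀ t : ℝ, 0 < t → t • tiltedStar n κ ∈ Γ) (hκ : 0 < κ)
    (husc : UpperSemicontinuousOn v Ω) (hfin : ∀ x ∈ Ω, v x < ⊤) {r : ℝ}
    (hΩ : {x : Euc n | ‖x‖ ∈ Ioc 0 r} ⊆ Ω) {x : Euc n} (hx : ‖x‖ ∈ Ioc 0 r) :
    v x + (2 * Real.log ‖x‖ : ℝ) ≤ sphereSup v r + (2 * Real.log r : ℝ) := by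
  have hr : 0 < r := hx.1.trans_le hx.2
  have hweighted {ε : ℝ} (hε : 0 < ε) :
      v x + logWeight (-ε) 1 κ ‖x‖ ≤ sphereSup v r + logWeight (-ε) 1 κ r := by
    have hzero : barrierWeight (-ε) 1 κ 0 < 0 := by
      simpa [barrierWeight, Real.zero_rpow hκ.ne'] using hε
    obtain ⟨ρ, hWρ, hρ, hρx⟩ := ((((continuous_barrierWeight hκ.le).tendsto 0).eventually_lt_const
      hzero |>.filter_mono nhdsWithin_le_nhds).and (Ioo_mem_nhdsGT hx.1)).exists
    refine hv.add_logWeight_le_of_annulus hsymm hΓ hκ (by linarith) husc hfin hρ.le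
      (fun z hz => hΩ ⟨hρ.trans_le hz.1, hz.2⟩) (fun z hz => ?_) (fun z hz => ?_) ⟨hρx.le, hx.2⟩
    · rw [hz, logWeight_of_nonpos hκ hWρ.le, EReal.add_bot]
      exact bot_le
    · rw [← hz]
      exact add_le_add_left (le_sphereSup_norm v z) _
  have hlim {s : ℝ} (hs : 0 < s) (c : EReal) :
      Tendsto (fun ε => c + logWeight (-ε) 1 κ s) (𝓝[>] 0) (𝓝 (c + logWeight 0 1 κ s)) :=
    tendsto_add_logWeight
      ((continuous_neg.tendsto' (0 : ℝ) 0 neg_zero).mono_left nhdsWithin_le_nhds)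
      tendsto_const_nhds hκ.le (by simp only [barrierWeight]; positivity) c
  simpa only [logWeight_zero_one hκ.ne', hx.1, hr] using le_of_tendsto_of_tendsto
    (hlim hx.1 (v x)) (hlim hr (sphereSup v r))
    (eventually_mem_nhdsWithin.mono fun ε hε => hweighted hε)

end MaximumPrinciple

theorem radial_subsolution_monotone_general {n : ℕ} {Γ : Set (Fin n → ℝ)} (hopen : IsOpen Γ)
    (hsymm : ∀ σ : Equiv.Perm (Fin n), ∀ lam ∈ Γ, lam ∘ σ ∈ Γ)
    (hcone : ∀ lam ∈ Γ, ∀ t : ℝ, 0 < t → t • lam ∈ Γ) (hstar : lamStar n ∈ Γ) (R : ℝ)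
    (v : Euc n → EReal) :
    (UpperSemicontinuousOn v {x | R < ‖x‖} → (∀ x, R < ‖x‖ → v x < ⊤) →
      SubsolE Γ {x | R < ‖x‖} v → AntitoneOn (sphereSup v) (Ioi R ∩ Ici 0)) ∧
    (UpperSemicontinuousOn v {x | 0 < ‖x‖ ∧ ‖x‖ < R} → (∀ x, 0 < ‖x‖ → ‖x‖ < R → v x < ⊤) →
      SubsolE Γ {x | 0 < ‖x‖ ∧ ‖x‖ < R} v →
      MonotoneOn (fun r => sphereSup v r + (2 * Real.log r : ℝ)) (Ioo 0 R)) := by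
  obtain ⟨κ, hκ, hmem⟩ := exists_tiltedStar_mem hopen hstar
  have hΓ := hcone _ hmem
  refine ⟨fun husc hfin hv r hr ρ _ hrρ => sphereSup_le_iff.2 fun y hy => ?_,
    fun husc hfin hv r hr ρ hρ hrρ => ?_⟩
  · exact hv.le_sphereSup hsymm hΓ hκ husc hfin hr.2
      (fun z hz => show R < ‖z‖ from hr.1.trans_le hz) (hrρ.trans_eq hy.symm)
  · have hsub : {x : Euc n | ‖x‖ ∈ Ioc 0 ρ} ⊆ {x | 0 < ‖x‖ ∧ ‖x‖ < R} :=
      fun z hz => ⟨hz.1, hz.2.trans_lt hρ.2⟩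
    refine le_sub_coe_iff_add_coe_le.1 (sphereSup_le_iff.2 fun x hx => ?_)
    subst hx
    exact le_sub_coe_iff_add_coe_le.2
      (hv.add_log_le_sphereSup hsymm hΓ hκ husc (fun z hz => hfin z hz.1 hz.2) hsub ⟨hr.1, hrρ⟩)

/-- **Monotonicity of radial subsolutions when `λ* ∈ Γ`** (Lemma 6.3):
(a) an upper semi-continuous radially symmetric subsolution of `λ(A[v]) ∈ ∂Γ` on
`{|x| > R}` is non-increasing in `r`;
(b) an upper semi-continuous radially symmetric subsolution on `{0 < |x| < R}` has
`v + 2 log r` non-decreasing in `r`. -/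
theorem radial_subsolution_monotone
    {n : ℕ} (hn : 2 ≤ n) (Γ : Set (Fin n → ℝ)) (hΓ : CondC Γ)
    (hstar : lamStar n ∈ Γ) (R : ℝ) (hR : 0 < R) :
    (∀ v : Euc n → EReal,
      UpperSemicontinuousOn v {x : Euc n | R < ‖x‖} →
      (∀ x : Euc n, R < ‖x‖ → v x < ⊤) →
      (∃ x : Euc n, R < ‖x‖ ∧ v x ≠ ⊥) →
      (∀ x y : Euc n, ‖x‖ = ‖y‖ → v x = v y) →
      SubsolE Γ {x : Euc n | R < ‖x‖} v →
      ∀ x y : Euc n, R < ‖x‖ → ‖x‖ ≤ ‖y‖ → v y ≤ v x) ∧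
    (∀ v : Euc n → EReal,
      UpperSemicontinuousOn v {x : Euc n | 0 < ‖x‖ ∧ ‖x‖ < R} →
      (∀ x : Euc n, 0 < ‖x‖ → ‖x‖ < R → v x < ⊤) →
      (∃ x : Euc n, (0 < ‖x‖ ∧ ‖x‖ < R) ∧ v x ≠ ⊥) →
      (∀ x y : Euc n, ‖x‖ = ‖y‖ → v x = v y) →
      SubsolE Γ {x : Euc n | 0 < ‖x‖ ∧ ‖x‖ < R} v →
      ∀ x y : Euc n, 0 < ‖x‖ → ‖x‖ ≤ ‖y‖ → ‖y‖ < R →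
        v x + ((2 * Real.log ‖x‖ : ℝ) : EReal) ≤
          v y + ((2 * Real.log ‖y‖ : ℝ) : EReal)) := by
  obtain ⟨-, -, hopen, hsymm, hcone, -⟩ := hΓ
  have hmono := radial_subsolution_monotone_general hopen hsymm hcone hstar R
  refine ⟨fun v husc hfin _ hrad hv x y hx hxy => ?_,
    fun v husc hfin _ hrad hv x y hx hxy hy => ?_⟩
  · simpa only [sphereSup_norm hrad] using
      (hmono v).1 husc hfin hv ⟨hx, norm_nonneg x⟩ ⟨hx.trans_le hxy, norm_nonneg y⟩ hxy
  · simpa only [sphereSup_norm hrad] using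
      (hmono v).2 husc hfin hv ⟨hx, hxy.trans_lt hy⟩ ⟨hx.trans_le hxy, hy⟩ hxy
end
end

section
/- Let n ≥ 2 and let v be a C¹ real-valued function defined in a neighborhood of 0 in ℝⁿ with p := ∇v(0) ≠ 0. Let λ ∈ ℝ∖{0}, let O be an n×n orthogonal matrix, set x̄ := (λ²/2)·Oᵀp (note x̄ ≠ 0), and define ψ(x) := O( λ²·(x − x̄)/|x − x̄|² + λ²·x̄/|x̄|² ) for x in a neighborhood of 0 not containing x̄. Then ψ(0) = 0 and the function v^ψ := v∘ψ + (1/n)·log|det Dψ| satisfies ∇v^ψ(0) = 0, where Dψ denotes the Jacobian matrix of ψ. -/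
open Filter Topology Metric Set
open scoped BigOperators

noncomputable section

/-!
The map `ψ` is an inversion of centre `x̄` and radius `λ` followed by an isometry, hence conformal:
`Dψ(x) = κ(x) U(x)` with `κ(x) = λ² / |x - x̄|²` and `U(x)` orthogonal. So `(1/n) log |det Dψ|` is
`log κ`, and `∇v^ψ(x) = κ(x) U(x)ᵀ ∇v(ψ x) + ∇(log κ)(x)`. At `x = 0` the matrix `U(0)ᵀ` is `Oᵀ`
followed by the reflection that sends `x̄` to `-x̄`. As `Oᵀ p = (2/λ²) x̄`, the first summand is
`-(2/|x̄|²) x̄`, while `∇(log κ)(0) = (2/|x̄|²) x̄`.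
-/

section ConformalPullback

variable {E : Type*} [NormedAddCommGroup E] [InnerProductSpace ℝ E]

/-- The transform `v^ψ = v ∘ ψ + (1/n) log |det Dψ|` of a function `v` under a change of variables
`ψ`, where `n = dim E`. By the convention `Real.log 0 = 0`, it equals `v ∘ ψ` where `det Dψ = 0`. -/
def conformalPullback (v : E → ℝ) (ψ : E → E) (x : E) : ℝ :=
  v (ψ x) + (1 / (Module.finrank ℝ E : ℝ)) * Real.log |LinearMap.det (fderiv ℝ ψ x : E →ₗ[ℝ] E)|

variable [FiniteDimensional ℝ E]

theorem abs_det_smul_linearIsometryEquiv (r : ℝ) (U : E ≃ₗᵢ[ℝ] E) :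
    |LinearMap.det ((r • (U : E →L[ℝ] E) : E →L[ℝ] E) : E →ₗ[ℝ] E)| =
      |r| ^ Module.finrank ℝ E := by
  have hU : (U : E →L[ℝ] E).toLinearMap.normDet = 1 := U.toLinearIsometry.normDet_eq_one
  rw [← LinearMap.normDet_eq_abs_det, ContinuousLinearMap.toLinearMap_smul, LinearMap.normDet_smul,
    hU, mul_one, Real.norm_eq_abs]

variable [Nontrivial E]

theorem conformalPullback_eq_add_log (v : E → ℝ) {ψ : E → E} {x : E} {r : ℝ} {U : E ≃ₗᵢ[ℝ] E}
    (hψ : HasFDerivAt ψ (r • (U : E →L[ℝ] E)) x) :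
    conformalPullback v ψ x = v (ψ x) + Real.log r := by
  have hn : (Module.finrank ℝ E : ℝ) ≠ 0 := Nat.cast_ne_zero.mpr Module.finrank_pos.ne'
  rw [conformalPullback, hψ.fderiv, abs_det_smul_linearIsometryEquiv, Real.log_pow, Real.log_abs,
    one_div, inv_mul_cancel_left₀ hn]

theorem hasGradientAt_conformalPullback {v : E → ℝ} {ψ : E → E} {x g l : E} {κ : E → ℝ}
    {U : E → E ≃ₗᵢ[ℝ] E}
    (hψ : ∀ᶠ y in 𝓝 x, HasFDerivAt ψ (κ y • (U y : E →L[ℝ] E)) y)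
    (hv : HasGradientAt v g (ψ x)) (hκ : HasGradientAt (fun y => Real.log (κ y)) l x) :
    HasGradientAt (conformalPullback v ψ) (κ x • (U x).symm g + l) x := by
  have hsum := (hv.hasFDerivAt.comp x hψ.self_of_nhds).add hκ.hasFDerivAt
  rw [hasGradientAt_iff_hasFDerivAt]
  refine (hsum.congr_of_eventuallyEq ?_).congr_fderiv ?_
  · filter_upwards [hψ] with y hy using conformalPullback_eq_add_log v hy
  · ext y
    have hU : inner ℝ ((U x).symm g) y = inner ℝ g (U x y) := (U x).symm.inner_map_eq_flip g y
    simp [hU]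

end ConformalPullback

section MobiusMap

open EuclideanGeometry

variable {E : Type*} [NormedAddCommGroup E] [InnerProductSpace ℝ E]

/-- The Möbius transformation obtained by following the inversion of centre `c` and radius `R` by
the translation that brings the image of `0` back to `0`, and then by the linear isometry `A`. -/
def mobiusMap (A : E ≃ₗᵢ[ℝ] E) (R : ℝ) (c x : E) : E :=
  A (inversion c R x - inversion c R 0)

variable (A : E ≃ₗᵢ[ℝ] E) (R : ℝ) (c : E)

theorem mobiusMap_zero : mobiusMap A R c 0 = 0 := by
  simp [mobiusMap]

theorem mobiusMap_apply (x : E) :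
    mobiusMap A R c x = A ((R ^ 2 / ‖x - c‖ ^ 2) • (x - c) + (R ^ 2 / ‖c‖ ^ 2) • c) := by
  simp [mobiusMap, inversion, dist_eq_norm, div_pow]

variable {R c}

theorem hasFDerivAt_mobiusMap {x : E} (hx : x ≠ c) :
    HasFDerivAt (mobiusMap A R c)
      ((R / dist x c) ^ 2 • (((ℝ ∙ (x - c))ᗮ.reflection.trans A : E ≃ₗᵢ[ℝ] E) : E →L[ℝ] E)) x := by
  refine (A.toContinuousLinearEquiv.hasFDerivAt.comp x
    ((hasFDerivAt_inversion hx).sub_const (inversion c R 0))).congr_fderiv ?_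
  ext y
  simp

theorem hasGradientAt_log_div_dist_sq [CompleteSpace E] (hR : R ≠ 0) {x : E} (hx : x ≠ c) :
    HasGradientAt (fun y => Real.log ((R / dist y c) ^ 2)) (-(2 / ‖x - c‖ ^ 2) • (x - c)) x := by
  have hnorm : ∀ {y}, y ≠ c → ‖y - c‖ ^ 2 ≠ 0 := fun hy => by simpa [sub_eq_zero] using hy
  have hlog := (((hasFDerivAt_id (𝕜 := ℝ) x).sub_const c).norm_sq.log (hnorm hx)).const_sub
    (Real.log (R ^ 2))
  rw [hasGradientAt_iff_hasFDerivAt]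
  refine (hlog.congr_of_eventuallyEq ?_).congr_fderiv ?_
  · filter_upwards [isOpen_ne.mem_nhds hx] with y hy
    rw [dist_eq_norm, div_pow, Real.log_div (pow_ne_zero 2 hR) (hnorm hy), id]
  · ext y
    simp
    ring

theorem hasGradientAt_conformalPullback_mobiusMap [FiniteDimensional ℝ E] [Nontrivial E]
    (hR : R ≠ 0) {v : E → ℝ} {x g : E} (hx : x ≠ c) (hv : HasGradientAt v g (mobiusMap A R c x)) :
    HasGradientAt (conformalPullback v (mobiusMap A R c))
      ((R / dist x c) ^ 2 • (ℝ ∙ (x - c))ᗮ.reflection (A.symm g) - (2 / ‖x - c‖ ^ 2) • (x - c))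
      x := by
  rw [sub_eq_add_neg, ← neg_smul]
  exact hasGradientAt_conformalPullback
    ((isOpen_ne.eventually_mem hx).mono fun _ hy => hasFDerivAt_mobiusMap A hy) hv
    (hasGradientAt_log_div_dist_sq hR hx)

theorem mobius_gradient_normalization_general [FiniteDimensional ℝ E] (hR : R ≠ 0)
    {v : E → ℝ} {p : E} (hv : HasGradientAt v p 0) (hp : p ≠ 0) (hc : c = (R ^ 2 / 2) • A.symm p) :
    mobiusMap A R c 0 = 0 ∧ c ≠ 0 ∧ HasGradientAt (conformalPullback v (mobiusMap A R c)) 0 0 := by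
  have : Nontrivial E := nontrivial_of_ne p 0 hp
  have hc0 : c ≠ 0 := by simp [hc, hR, hp]
  refine ⟨mobiusMap_zero A R c, hc0, ?_⟩
  have hAp : A.symm p = (2 / R ^ 2) • c := by
    rw [hc, smul_smul, div_mul_div_cancel₀ (pow_ne_zero 2 hR), div_self two_ne_zero, one_smul]
  have hreflection : (ℝ ∙ (0 - c))ᗮ.reflection c = -c := by
    simpa [neg_eq_iff_eq_neg] using
      Submodule.reflection_orthogonalComplement_singleton_eq_neg (𝕜 := ℝ) (0 - c)
  have hgrad := hasGradientAt_conformalPullback_mobiusMap A hR hc0.symm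
    (by rwa [mobiusMap_zero] : HasGradientAt v p (mobiusMap A R c 0))
  convert hgrad using 1
  have hcoeff : R ^ 2 / ‖c‖ ^ 2 * (2 / R ^ 2) = 2 / ‖c‖ ^ 2 := by field_simp
  rw [hAp, map_smul, hreflection, smul_smul, dist_eq_norm, zero_sub, norm_neg, div_pow, hcoeff,
    sub_self]

end MobiusMap

section UnitaryGroup

variable {𝕜 ι : Type*} [RCLike 𝕜] [Fintype ι] [DecidableEq ι]

/-- The isometry of Euclidean space given by a unitary (or, over `ℝ`, orthogonal) matrix. -/
def unitaryGroupIsometry (O : Matrix.unitaryGroup ι 𝕜) :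
    EuclideanSpace 𝕜 ι ≃ₗᵢ[𝕜] EuclideanSpace 𝕜 ι :=
  Unitary.linearIsometryEquiv
    ⟨Matrix.toEuclideanCLM (𝕜 := 𝕜) (O : Matrix ι ι 𝕜), Unitary.map_mem _ O.2⟩

theorem unitaryGroupIsometry_apply (O : Matrix.unitaryGroup ι 𝕜) (x : EuclideanSpace 𝕜 ι) :
    unitaryGroupIsometry O x = Matrix.toEuclideanLin O x := rfl

theorem unitaryGroupIsometry_symm_apply (O : Matrix.unitaryGroup ι 𝕜) (x : EuclideanSpace 𝕜 ι) :
    (unitaryGroupIsometry O).symm x = Matrix.toEuclideanLin (O : Matrix ι ι 𝕜).conjTranspose x := by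
  rw [← Matrix.coe_toEuclideanCLM_eq_toEuclideanLin, ← Matrix.star_eq_conjTranspose, map_star]
  rfl

end UnitaryGroup

/-- **Normalizing the gradient by a Möbius transformation** (Lemma 4.5): for a `C¹`
function `v` near `0` with `p = ∇v(0) ≠ 0`, the Möbius transformation
`ψ(x) = O(λ²(x - x̄)/|x - x̄|² + λ² x̄/|x̄|²)` with `x̄ = (λ²/2) Oᵀ p` satisfies `ψ(0) = 0`
and `∇v^ψ(0) = 0`, where `v^ψ = v ∘ ψ + (1/n) log |det Dψ|`. -/
theorem mobius_gradient_normalization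
    {n : ℕ} (hn : 2 ≤ n)
    (v : Euc n → ℝ) (hv : ∃ U ∈ 𝓝 (0 : Euc n), ContDiffOn ℝ 1 v U)
    (p : Euc n) (hp : p = gradient v 0) (hp0 : p ≠ 0)
    (lam : ℝ) (hlam : lam ≠ 0)
    (O : Matrix (Fin n) (Fin n) ℝ) (hO : O.transpose * O = 1)
    (xbar : Euc n)
    (hxbar : xbar = (lam ^ 2 / 2) • (Matrix.toEuclideanLin O.transpose p))
    (ψ : Euc n → Euc n)
    (hψ : ∀ x, ψ x = Matrix.toEuclideanLin O
      ((lam ^ 2 / ‖x - xbar‖ ^ 2) • (x - xbar) + (lam ^ 2 / ‖xbar‖ ^ 2) • xbar))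
    (w : Euc n → ℝ)
    (hw : ∀ x, w x = v (ψ x) +
      (1 / (n : ℝ)) * Real.log |LinearMap.det (fderiv ℝ ψ x : Euc n →ₗ[ℝ] Euc n)|) :
    ψ 0 = 0 ∧ xbar ≠ 0 ∧ gradient w 0 = 0 := by
  let A := unitaryGroupIsometry ⟨O, Matrix.mem_unitaryGroup_iff'.mpr hO⟩
  obtain ⟨U, hU, hvU⟩ := hv
  have hgrad : HasGradientAt v p 0 :=
    hp ▸ ((hvU.contDiffAt hU).differentiableAt one_ne_zero).hasGradientAt
  have hc : xbar = (lam ^ 2 / 2) • A.symm p := by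
    rw [hxbar, unitaryGroupIsometry_symm_apply, Matrix.conjTranspose_eq_transpose_of_trivial]
  obtain rfl : ψ = mobiusMap A lam xbar :=
    funext fun x => by rw [hψ, mobiusMap_apply, unitaryGroupIsometry_apply]
  obtain rfl : w = conformalPullback v (mobiusMap A lam xbar) :=
    funext fun x => by rw [hw, conformalPullback, finrank_euclideanSpace_fin]
  exact (mobius_gradient_normalization_general A hlam hgrad hp0 hc).imp_right
    (And.imp_right HasGradientAt.gradient)
end
end

section
/- Let γ, v₀, w₀ ∈ ℝ. There exists a (necessarily unique) smooth solution v : ℝ → ℝ of the ordinary differential equation v'' + ((γ−1)/2)·(v')² + e^{2v} = 0 on all of (−∞,∞) with v(0) = v₀ and v'(0) = w₀ if and only if either −1 ≤ γ ≤ 1, or w₀ ≠ 0 and −1 − 2·w₀⁻²·e^{2v₀} < γ < −1, or w₀ = 0 and γ < −1. -/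
noncomputable section

/-!
Write `α = (1 - γ) / 2`, so that the equation reads `v'' = α v'² - e^{2v}`. Solutions conserve the
energy `e^{-2αv} v'² / 2 + ∫₀^v e^{2(1-α)s} ds`, whose potential term increases to
`1 / (2(α - 1))` if `α > 1` and to `∞` if `α ≤ 1`.

If `α ≥ 0` and the energy is below that supremum, then `v` stays below a level `M` at which the
potential exceeds the energy, and this also forces `|v'| ≤ e^M`; thus the solution remains bounded
on bounded time intervals and exists globally.

Otherwise a power of `e^{-v}` would be a concave positive function on the whole line, hence
constant, which no solution allows: for `α < 0` the function `e^{-αv}` is concave, and for an energy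
of at least `1 / (2(α - 1))` the function `e^{-v}` is.
-/

open Set Filter Topology
open scoped Manifold ContDiff

section ConcaveBounded

variable {E : Type*} [AddCommGroup E] [Module ℝ E]

theorem eq_of_concaveOn_univ_of_bddBelow {f : E → ℝ} (hf : ConcaveOn ℝ univ f)
    (hb : BddBelow (range f)) (x y : E) : f x = f y := by
  obtain ⟨b, hb⟩ := hb
  suffices le : ∀ x y, f x ≤ f y from le_antisymm (le x y) (le y x)
  intro x y
  by_contra! hlt
  have hdrop : 0 < f x - f y := sub_pos.2 hlt
  have growth (s : ℝ) (hs : 1 ≤ s) : s * (f x - f y) ≤ f x - b := by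
    have hs₀ : 0 < s := one_pos.trans_le hs
    have hcomb : (1 - s⁻¹) • x + s⁻¹ • (x + s • (y - x)) = y := by
      simp only [sub_smul, one_smul, smul_add, inv_smul_smul₀ hs₀.ne']
      abel
    have hconc := hf.2 (mem_univ x) (mem_univ (x + s • (y - x)))
      (sub_nonneg.2 (inv_le_one_of_one_le₀ hs)) (inv_pos.2 hs₀).le (sub_add_cancel 1 s⁻¹)
    rw [hcomb, smul_eq_mul, smul_eq_mul] at hconc
    have hscaled := mul_le_mul_of_nonneg_left hconc hs₀.le
    have hexpand : s * ((1 - s⁻¹) * f x + s⁻¹ * f (x + s • (y - x))) =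
        s * f x - f x + f (x + s • (y - x)) := by
      field_simp
    linarith [hb (mem_range_self (x + s • (y - x)))]
  have hbound := growth (max 1 ((f x - b + 1) / (f x - f y))) (le_max_left _ _)
  have hlarge := (div_le_iff₀ hdrop).1 (le_max_right 1 ((f x - b + 1) / (f x - f y)))
  linarith

end ConcaveBounded

section GlobalIntegralCurves

variable {E : Type*} [NormedAddCommGroup E] [NormedSpace ℝ E]

theorem isMIntegralCurveOn_iff_isIntegralCurveOn {γ : ℝ → E} {F : E → E} {s : Set ℝ} :
    IsMIntegralCurveOn (I := 𝓘(ℝ, E)) γ F s ↔ IsIntegralCurveOn γ (fun _ ↦ F) s := by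
  refine forall₂_congr fun t _ ↦ ⟨fun h ↦ ?_, fun h ↦ h.hasFDerivWithinAt.hasMFDerivWithinAt⟩
  have hderiv : HasFDerivWithinAt γ ((1 : ℝ →L[ℝ] ℝ).smulRight (F (γ t))) s t :=
    h.hasFDerivWithinAt
  simpa using hderiv.hasDerivWithinAt

theorem isMIntegralCurve_iff_isIntegralCurve {γ : ℝ → E} {F : E → E} :
    IsMIntegralCurve (I := 𝓘(ℝ, E)) γ F ↔ IsIntegralCurve γ fun _ ↦ F :=
  isMIntegralCurve_iff_isMIntegralCurveOn.trans <|
    isMIntegralCurveOn_iff_isIntegralCurveOn.trans isIntegralCurveOn_univ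

theorem contDiff_of_isIntegralCurve [CompleteSpace E] {γ : ℝ → E} {v : ℝ → E → E} {n : ℕ∞}
    (hv : ContDiff ℝ n (Function.uncurry v)) (hγ : IsIntegralCurve γ v) : ContDiff ℝ n γ := by
  refine contDiff_iff_contDiffAt.2 fun t ↦ ?_
  have hIcc : ContDiffOn ℝ n γ (Icc (t - 1) (t + 1)) :=
    ODE.contDiffOn_enat_Icc_of_hasDerivWithinAt (u := univ) hv.contDiffOn
      (fun s _ ↦ (hγ s).hasDerivWithinAt) (mapsTo_univ _ _)
  exact hIcc.contDiffAt (Icc_mem_nhds (by linarith) (by linarith))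

theorem exists_isIntegralCurve_of_hasCompactSupport [CompleteSpace E] {F : E → E}
    (hF : ContDiff ℝ 1 F) (hsupp : HasCompactSupport F) (x : E) :
    ∃ γ : ℝ → E, γ 0 = x ∧ IsIntegralCurve γ fun _ ↦ F := by
  obtain ⟨K, hK⟩ := ContDiff.lipschitzWith_of_hasCompactSupport hsupp hF one_ne_zero
  obtain ⟨C, hC⟩ := hsupp.exists_bound_of_continuous hF.continuous
  have hC' (y : E) : ‖F y‖ ≤ C.toNNReal := (hC y).trans (Real.le_coe_toNNReal C)
  have local_curve (y : E) :
      ∃ γ : ℝ → E, γ 0 = y ∧ IsMIntegralCurveOn (I := 𝓘(ℝ, E)) γ F (Ioo (-1) 1) := by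
    have hPL : IsPicardLindelof (fun _ ↦ F) (tmin := -1) (tmax := 1) ⟨0, by simp⟩ y
        C.toNNReal 0 C.toNNReal K :=
      .of_time_independent (fun z _ ↦ hC' z) hK.lipschitzOnWith (by simp)
    obtain ⟨γ, hγ₀, hγ⟩ := hPL.exists_eq_forall_mem_Icc_hasDerivWithinAt₀
    exact ⟨γ, hγ₀, isMIntegralCurveOn_iff_isIntegralCurveOn.2
      (IsIntegralCurveOn.mono hγ Ioo_subset_Icc_self)⟩
  obtain ⟨γ, hγ₀, hγ⟩ := exists_isMIntegralCurve_of_isMIntegralCurveOn (I := 𝓘(ℝ, E)) (v := F)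
    (contMDiff_vectorSpace_iff_contDiff.2 hF) one_pos local_curve x
  exact ⟨γ, hγ₀, isMIntegralCurve_iff_isIntegralCurve.1 hγ⟩

/- Bootstrap: at a time of minimal modulus at which `g ≥ R'`, the assumption and continuity would
give `g ≤ R`. -/
theorem forall_le_of_forall_lt_imp_le {g : ℝ → ℝ} (hg : Continuous g) {R R' T : ℝ}
    (hR : R < R') (hg₀ : g 0 ≤ R)
    (h : ∀ τ ≤ T, (∀ t ∈ Ioo (-τ) τ, g t < R') → ∀ t ∈ Ioo (-τ) τ, g t ≤ R) :
    ∀ t ∈ Ioo (-T) T, g t ≤ R := by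
  refine h T le_rfl fun t ht ↦ ?_
  by_contra! hgt
  have hcompact : IsCompact (Icc (-T) T ∩ {s | R' ≤ g s}) :=
    isCompact_Icc.inter_right (isClosed_le continuous_const hg)
  obtain ⟨s, ⟨hsT, hs⟩, hmin⟩ :=
    hcompact.exists_isMinOn ⟨t, Ioo_subset_Icc_self ht, hgt⟩ continuous_abs.continuousOn
  have hs₀ : 0 < |s| := by
    refine abs_pos.2 fun hs₀ ↦ ?_
    rw [hs₀, mem_ofPred_eq] at hs
    linarith
  have hsT' : |s| ≤ T := abs_le.2 hsT
  have hbefore : ∀ r ∈ Ioo (-|s|) |s|, g r ≤ R := by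
    refine h |s| hsT' fun r hr ↦ ?_
    by_contra! hgr
    exact (abs_lt.2 hr).not_ge
      (hmin ⟨⟨by linarith [hr.1], by linarith [hr.2]⟩, hgr⟩)
  have hclosure : closure (Ioo (-|s|) |s|) ⊆ {r | g r ≤ R} :=
    closure_minimal hbefore (isClosed_le hg continuous_const)
  rw [closure_Ioo (by linarith)] at hclosure
  have hsR : g s ≤ R := hclosure (abs_le.1 le_rfl)
  exact (hsR.trans_lt hR).not_ge hs

theorem exists_isIntegralCurve_of_apriori_bound [FiniteDimensional ℝ E] {F : E → E}
    (hF : ContDiff ℝ 1 F) {x : E}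
    (hbound : ∀ T, ∃ R, ∀ τ ≤ T, ∀ γ : ℝ → E, γ 0 = x →
      IsIntegralCurveOn γ (fun _ ↦ F) (Ioo (-τ) τ) → ∀ t ∈ Ioo (-τ) τ, ‖γ t‖ ≤ R) :
    ∃ γ : ℝ → E, γ 0 = x ∧ IsIntegralCurve γ fun _ ↦ F := by
  have : CompleteSpace E := FiniteDimensional.complete ℝ E
  suffices ∀ T, ∃ γ : ℝ → E, γ 0 = x ∧ IsMIntegralCurveOn (I := 𝓘(ℝ, E)) γ F (Ioo (-T) T) by
    obtain ⟨γ, hγ₀, hγ⟩ := (exists_isMIntegralCurve_iff_exists_isMIntegralCurveOn_Ioo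
      (I := 𝓘(ℝ, E)) (v := F) (contMDiff_vectorSpace_iff_contDiff.2 hF) x).2 this
    exact ⟨γ, hγ₀, isMIntegralCurve_iff_isIntegralCurve.1 hγ⟩
  intro T
  obtain ⟨R, hR⟩ := hbound T
  let χ : ContDiffBump (0 : E) := ⟨max R ‖x‖ + 1, max R ‖x‖ + 2, by positivity, by linarith⟩
  obtain ⟨γ, hγ₀, hγ⟩ := exists_isIntegralCurve_of_hasCompactSupport (F := fun y ↦ χ y • F y)
    (χ.contDiff.smul hF) χ.hasCompactSupport.smul_right x
  have uncut {t : ℝ} (ht : ‖γ t‖ < max R ‖x‖ + 1) : HasDerivAt γ (F (γ t)) t :=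
    (hγ t).congr_deriv <| by
      simp only [χ.one_of_mem_closedBall (mem_closedBall_zero_iff.2 ht.le), one_smul]
  have hγT : ∀ t ∈ Ioo (-T) T, ‖γ t‖ ≤ max R ‖x‖ :=
    forall_le_of_forall_lt_imp_le hγ.continuous.norm (lt_add_one _)
      (by rw [hγ₀]; exact le_max_right _ _) fun τ hτ hlt t ht ↦
        (hR τ hτ γ hγ₀ (fun s hs ↦ (uncut (hlt s hs)).hasDerivWithinAt) t ht).trans
          (le_max_left _ _)
  exact ⟨γ, hγ₀, isMIntegralCurveOn_iff_isIntegralCurveOn.2 fun t ht ↦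
    (uncut ((hγT t ht).trans_lt (lt_add_one _))).hasDerivWithinAt⟩

end GlobalIntegralCurves

section RadialEquation

/-- The phase-space field of the second-order equation `v'' = α v'² - e^{2v}`, on pairs
`(v, v')`. -/
def radialField (α : ℝ) (p : ℝ × ℝ) : ℝ × ℝ :=
  (p.2, α * p.2 ^ 2 - Real.exp (2 * p.1))

/-- The potential energy of `v'' = α v'² - e^{2v}` with the integrating factor `e^{-2αv}`,
normalized to vanish at `0`. It is kept as an integral so that `α = 1`, where it is linear, needs
no separate formula. -/
def radialPotential (α x : ℝ) : ℝ :=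
  ∫ s in 0..x, Real.exp (2 * (1 - α) * s)

/-- The conserved energy of `v'' = α v'² - e^{2v}`, as a function of the phase point `(v, v')`. -/
def radialEnergy (α : ℝ) (p : ℝ × ℝ) : ℝ :=
  Real.exp (-2 * α * p.1) * p.2 ^ 2 / 2 + radialPotential α p.1

variable {α : ℝ} {γ : ℝ → ℝ × ℝ} {s : Set ℝ}

theorem contDiff_radialField (α : ℝ) : ContDiff ℝ ∞ (radialField α) := by
  unfold radialField
  fun_prop

theorem hasDerivAt_radialPotential (α x : ℝ) :
    HasDerivAt (radialPotential α) (Real.exp (2 * (1 - α) * x)) x :=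
  have hcont : Continuous fun s ↦ Real.exp (2 * (1 - α) * s) := by fun_prop
  intervalIntegral.integral_hasDerivAt_right (hcont.intervalIntegrable _ _)
    (hcont.stronglyMeasurableAtFilter _ _) hcont.continuousAt

theorem two_mul_sub_one_mul_radialPotential (α x : ℝ) :
    2 * (α - 1) * radialPotential α x = 1 - Real.exp (2 * (1 - α) * x) := by
  have hderiv (s : ℝ) : HasDerivAt (fun s ↦ -Real.exp (2 * (1 - α) * s))
      (2 * (α - 1) * Real.exp (2 * (1 - α) * s)) s := by
    refine ((hasDerivAt_id s).const_mul (2 * (1 - α))).exp.neg.congr_deriv ?_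
    simp only [id_eq]
    ring
  rw [radialPotential, ← intervalIntegral.integral_const_mul,
    intervalIntegral.integral_eq_sub_of_hasDerivAt (fun s _ ↦ hderiv s)
      (Continuous.intervalIntegrable (by fun_prop) _ _)]
  simp only [mul_zero, Real.exp_zero]
  ring

theorem strictMono_radialPotential (α : ℝ) : StrictMono (radialPotential α) :=
  strictMono_of_hasDerivAt_pos (hasDerivAt_radialPotential α) fun _ ↦ Real.exp_pos _

theorem radialPotential_sub_le (hα : 0 ≤ α) {x y : ℝ} (hxy : x ≤ y) :
    radialPotential α y - radialPotential α x ≤ Real.exp (-2 * α * x) * Real.exp (2 * y) / 2 := by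
  have hderiv (s : ℝ) : HasDerivAt
      (fun s ↦ Real.exp (-2 * α * x) * Real.exp (2 * s) / 2 - radialPotential α s)
      (Real.exp (-2 * α * x) * Real.exp (2 * s) - Real.exp (2 * (1 - α) * s)) s := by
    have hexp := ((hasDerivAt_id s).const_mul 2).exp.const_mul (Real.exp (-2 * α * x))
    refine ((hexp.div_const 2).sub (hasDerivAt_radialPotential α s)).congr_deriv ?_
    simp only [id_eq]
    ring
  have hmono : MonotoneOn
      (fun s ↦ Real.exp (-2 * α * x) * Real.exp (2 * s) / 2 - radialPotential α s) (Ici x) := by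
    refine monotoneOn_of_hasDerivWithinAt_nonneg (convex_Ici x)
      (fun s _ ↦ (hderiv s).continuousAt.continuousWithinAt)
      (fun s _ ↦ (hderiv s).hasDerivWithinAt) fun s hs ↦ ?_
    rw [interior_Ici, mem_Ioi] at hs
    rw [sub_nonneg, ← Real.exp_add, Real.exp_le_exp]
    linarith [mul_le_mul_of_nonneg_left hs.le hα]
  have hle := hmono self_mem_Ici hxy hxy
  have hpos : 0 < Real.exp (-2 * α * x) * Real.exp (2 * x) / 2 := by positivity
  linarith

theorem tendsto_radialPotential_atTop (hα : α ≤ 1) : Tendsto (radialPotential α) atTop atTop := by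
  refine tendsto_atTop_mono' atTop ?_ tendsto_id
  filter_upwards [eventually_ge_atTop 0] with x hx
  have hone : ∀ s ∈ Icc 0 x, 1 ≤ Real.exp (2 * (1 - α) * s) := fun s hs ↦
    Real.one_le_exp (mul_nonneg (by linarith) hs.1)
  have hmono : ∫ _ in 0..x, (1 : ℝ) ≤ radialPotential α x :=
    intervalIntegral.integral_mono_on hx (continuous_const.intervalIntegrable _ _)
      (Continuous.intervalIntegrable (by fun_prop) _ _) hone
  simpa using hmono

theorem exists_lt_radialPotential {E : ℝ} (hE : 2 * (α - 1) * E < 1) :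
    ∃ M, E < radialPotential α M := by
  rcases le_or_gt α 1 with hα | hα
  · exact ((tendsto_radialPotential_atTop hα).eventually_gt_atTop E).exists
  · have hlim : Tendsto (fun x ↦ 1 - Real.exp (2 * (1 - α) * x)) atTop (𝓝 (1 - 0)) :=
      (Real.tendsto_exp_atBot.comp
        (tendsto_id.const_mul_atTop_of_neg (by linarith))).const_sub 1
    obtain ⟨M, hM⟩ := (hlim.eventually_const_lt (hE.trans_eq (sub_zero 1).symm)).exists
    rw [← two_mul_sub_one_mul_radialPotential] at hM
    exact ⟨M, lt_of_mul_lt_mul_left hM (by linarith)⟩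

theorem one_sub_two_mul_radialEnergy (α : ℝ) (p : ℝ × ℝ) :
    1 - 2 * (α - 1) * radialEnergy α p =
      Real.exp (-2 * α * p.1) * (Real.exp (2 * p.1) - (α - 1) * p.2 ^ 2) := by
  have hexp : Real.exp (2 * (1 - α) * p.1) = Real.exp (-2 * α * p.1) * Real.exp (2 * p.1) := by
    rw [← Real.exp_add]
    ring_nf
  have hpot := two_mul_sub_one_mul_radialPotential α p.1
  rw [hexp] at hpot
  rw [radialEnergy]
  linear_combination -hpot

theorem two_mul_radialEnergy_lt_one_iff {p : ℝ × ℝ} :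
    2 * (α - 1) * radialEnergy α p < 1 ↔ (α - 1) * p.2 ^ 2 < Real.exp (2 * p.1) := by
  rw [← sub_pos, one_sub_two_mul_radialEnergy, mul_pos_iff_of_pos_left (Real.exp_pos _), sub_pos]

theorem hasDerivAt_radialEnergy_comp {t : ℝ} (hγ : HasDerivAt γ (radialField α (γ t)) t) :
    HasDerivAt (fun t ↦ radialEnergy α (γ t)) 0 t := by
  have hv : HasDerivAt (fun t ↦ (γ t).1) (γ t).2 t := hγ.fst
  have hw : HasDerivAt (fun t ↦ (γ t).2) (α * (γ t).2 ^ 2 - Real.exp (2 * (γ t).1)) t := hγ.snd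
  have hkin := ((hv.const_mul (-2 * α)).exp.mul (hw.pow 2)).div_const 2
  have hpot := (hasDerivAt_radialPotential α (γ t).1).comp t hv
  refine (hkin.add hpot).congr_deriv ?_
  have hexp : Real.exp (2 * (1 - α) * (γ t).1) =
      Real.exp (-2 * α * (γ t).1) * Real.exp (2 * (γ t).1) := by
    rw [← Real.exp_add]
    ring_nf
  rw [hexp]
  simp only [Nat.cast_ofNat, Nat.add_one_sub_one, pow_one, Pi.pow_apply]
  ring

theorem radialEnergy_eq_of_isIntegralCurveOn (hs : IsOpen s) (hs' : IsPreconnected s)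
    (hγ : IsIntegralCurveOn γ (fun _ ↦ radialField α) s) {t₁ t₂ : ℝ} (h₁ : t₁ ∈ s) (h₂ : t₂ ∈ s) :
    radialEnergy α (γ t₁) = radialEnergy α (γ t₂) := by
  have hderiv (t : ℝ) (ht : t ∈ s) : HasDerivAt (fun t ↦ radialEnergy α (γ t)) 0 t :=
    hasDerivAt_radialEnergy_comp ((hγ t ht).hasDerivAt (hs.mem_nhds ht))
  exact hs.is_const_of_deriv_eq_zero hs'
    (fun t ht ↦ (hderiv t ht).differentiableAt.differentiableWithinAt)
    (fun t ht ↦ (hderiv t ht).deriv) h₁ h₂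

theorem fst_lt_of_radialEnergy_lt {p : ℝ × ℝ} {M : ℝ}
    (hp : radialEnergy α p < radialPotential α M) : p.1 < M := by
  refine (strictMono_radialPotential α).lt_iff_lt.1 (lt_of_le_of_lt ?_ hp)
  exact le_add_of_nonneg_left (by positivity)

theorem abs_snd_le_of_radialEnergy_lt (hα : 0 ≤ α) {p : ℝ × ℝ} {M : ℝ}
    (hp : radialEnergy α p < radialPotential α M) : |p.2| ≤ Real.exp M := by
  have hpot := radialPotential_sub_le hα (fst_lt_of_radialEnergy_lt hp).le
  have hkin : Real.exp (-2 * α * p.1) * p.2 ^ 2 ≤ Real.exp (-2 * α * p.1) * Real.exp (2 * M) := by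
    rw [radialEnergy] at hp
    linarith
  refine abs_le_of_sq_le_sq ?_ (Real.exp_pos M).le
  rw [← Real.exp_nat_mul]
  exact_mod_cast le_of_mul_le_mul_left hkin (Real.exp_pos _)

theorem norm_le_of_isIntegralCurveOn_radialField (hα : 0 ≤ α) {M τ : ℝ}
    (hM : radialEnergy α (γ 0) < radialPotential α M)
    (hγ : IsIntegralCurveOn γ (fun _ ↦ radialField α) (Ioo (-τ) τ)) {t : ℝ} (ht : t ∈ Ioo (-τ) τ) :
    ‖γ t‖ ≤ |(γ 0).1| + Real.exp M * (1 + τ) := by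
  have hτ : 0 < τ := (abs_nonneg t).trans_lt (abs_lt.2 ht)
  have h₀ : (0 : ℝ) ∈ Ioo (-τ) τ := ⟨neg_lt_zero.2 hτ, hτ⟩
  have velocity_le (s : ℝ) (hs : s ∈ Ioo (-τ) τ) : |(γ s).2| ≤ Real.exp M :=
    abs_snd_le_of_radialEnergy_lt hα
      ((radialEnergy_eq_of_isIntegralCurveOn isOpen_Ioo isPreconnected_Ioo hγ hs h₀).trans_lt hM)
  have displacement_le : |(γ t).1 - (γ 0).1| ≤ Real.exp M * |t| := by
    simpa using (convex_Ioo (-τ) τ).norm_image_sub_le_of_norm_hasDerivWithin_le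
      (f := fun t ↦ (γ t).1) (fun s hs ↦ (hγ s hs).fst) velocity_le h₀ ht
  have htime : Real.exp M * |t| ≤ Real.exp M * τ := by
    gcongr
    exact (abs_lt.2 ht).le
  have hexp := Real.exp_pos M
  refine max_le ?_ ?_
  · rw [Real.norm_eq_abs]
    linarith [abs_sub_abs_le_abs_sub (γ t).1 (γ 0).1]
  · rw [Real.norm_eq_abs]
    nlinarith [velocity_le t ht, abs_nonneg (γ 0).1]

theorem exists_isIntegralCurve_radialField (hα : 0 ≤ α) {p : ℝ × ℝ}
    (hp : (α - 1) * p.2 ^ 2 < Real.exp (2 * p.1)) :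
    ∃ γ : ℝ → ℝ × ℝ, γ 0 = p ∧ IsIntegralCurve γ fun _ ↦ radialField α := by
  obtain ⟨M, hM⟩ := exists_lt_radialPotential (two_mul_radialEnergy_lt_one_iff.2 hp)
  refine exists_isIntegralCurve_of_apriori_bound ((contDiff_radialField α).of_le (by simp))
    fun T ↦ ⟨|p.1| + Real.exp M * (1 + T), fun τ hτ γ hγ₀ hγ t ht ↦ ?_⟩
  subst hγ₀
  refine (norm_le_of_isIntegralCurveOn_radialField hα hM hγ ht).trans ?_
  gcongr

theorem hasDerivAt_exp_neg_mul_radial (c : ℝ) (hγ : IsIntegralCurve γ fun _ ↦ radialField α)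
    (t : ℝ) : HasDerivAt (fun t ↦ Real.exp (-c * (γ t).1))
      (-c * (γ t).2 * Real.exp (-c * (γ t).1)) t := by
  have hv : HasDerivAt (fun t ↦ (γ t).1) (γ t).2 t := (hγ t).fst
  exact (hv.const_mul (-c)).exp.congr_deriv (mul_comm _ _)

theorem hasDerivAt_deriv_exp_neg_mul_radial (c : ℝ)
    (hγ : IsIntegralCurve γ fun _ ↦ radialField α) (t : ℝ) :
    HasDerivAt (fun t ↦ -c * (γ t).2 * Real.exp (-c * (γ t).1))
      (c * ((c - α) * (γ t).2 ^ 2 + Real.exp (2 * (γ t).1)) * Real.exp (-c * (γ t).1)) t := by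
  have hw : HasDerivAt (fun t ↦ (γ t).2) (α * (γ t).2 ^ 2 - Real.exp (2 * (γ t).1)) t :=
    (hγ t).snd
  refine ((hw.const_mul (-c)).mul (hasDerivAt_exp_neg_mul_radial c hγ t)).congr_deriv ?_
  ring

theorem exists_snd_ne_zero_of_isIntegralCurve_radialField
    (hγ : IsIntegralCurve γ fun _ ↦ radialField α) : ∃ t, (γ t).2 ≠ 0 := by
  by_contra! hw
  have hderiv : HasDerivAt (fun t ↦ (γ t).2) (α * (γ 0).2 ^ 2 - Real.exp (2 * (γ 0).1)) 0 :=
    (hγ 0).snd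
  simp only [hw] at hderiv
  have hzero := hderiv.unique (hasDerivAt_const 0 0)
  linarith [Real.exp_pos (2 * (γ 0).1)]

/- The quantity is `(e^{-cv})'' e^{cv}`: were it nowhere positive, `e^{-cv}` would be concave. -/
theorem exists_pos_of_isIntegralCurve_radialField {c : ℝ} (hc : c ≠ 0)
    (hγ : IsIntegralCurve γ fun _ ↦ radialField α) :
    ∃ t, 0 < c * ((c - α) * (γ t).2 ^ 2 + Real.exp (2 * (γ t).1)) := by
  by_contra! hle
  have hy := hasDerivAt_exp_neg_mul_radial c hγ
  have hconcave : ConcaveOn ℝ univ fun t ↦ Real.exp (-c * (γ t).1) :=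
    concaveOn_of_hasDerivWithinAt2_nonpos convex_univ
      (fun t _ ↦ (hy t).continuousAt.continuousWithinAt) (fun t _ ↦ (hy t).hasDerivWithinAt)
      (fun t _ ↦ (hasDerivAt_deriv_exp_neg_mul_radial c hγ t).hasDerivWithinAt)
      fun t _ ↦ mul_nonpos_of_nonpos_of_nonneg (hle t) (Real.exp_pos _).le
  have hconst := eq_of_concaveOn_univ_of_bddBelow hconcave
    ⟨0, forall_mem_range.2 fun t ↦ (Real.exp_pos _).le⟩
  obtain ⟨t, ht⟩ := exists_snd_ne_zero_of_isIntegralCurve_radialField hγ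
  have hzero : -c * (γ t).2 * Real.exp (-c * (γ t).1) = 0 :=
    (hy t).unique ((hasDerivAt_const t _).congr_of_eventuallyEq
      (Eventually.of_forall fun s ↦ hconst s t))
  simp [hc, ht] at hzero

theorem nonneg_of_isIntegralCurve_radialField (hγ : IsIntegralCurve γ fun _ ↦ radialField α) :
    0 ≤ α := by
  by_contra! hα
  obtain ⟨t, ht⟩ := exists_pos_of_isIntegralCurve_radialField hα.ne hγ
  rw [sub_self, zero_mul, zero_add] at ht
  exact (mul_neg_of_neg_of_pos hα (Real.exp_pos _)).not_gt ht

theorem sub_one_mul_sq_lt_of_isIntegralCurve_radialField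
    (hγ : IsIntegralCurve γ fun _ ↦ radialField α) (t : ℝ) :
    (α - 1) * (γ t).2 ^ 2 < Real.exp (2 * (γ t).1) := by
  obtain ⟨s, hs⟩ := exists_pos_of_isIntegralCurve_radialField one_ne_zero hγ
  have henergy := radialEnergy_eq_of_isIntegralCurveOn isOpen_univ isPreconnected_univ
    (hγ.isIntegralCurveOn univ) (mem_univ t) (mem_univ s)
  rw [← two_mul_radialEnergy_lt_one_iff, henergy, two_mul_radialEnergy_lt_one_iff]
  linarith

theorem exists_isIntegralCurve_radialField_iff {p : ℝ × ℝ} :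
    (∃ γ : ℝ → ℝ × ℝ, γ 0 = p ∧ IsIntegralCurve γ fun _ ↦ radialField α) ↔
      0 ≤ α ∧ (α - 1) * p.2 ^ 2 < Real.exp (2 * p.1) := by
  constructor
  · rintro ⟨γ, rfl, hγ⟩
    exact ⟨nonneg_of_isIntegralCurve_radialField hγ,
      sub_one_mul_sq_lt_of_isIntegralCurve_radialField hγ 0⟩
  · exact fun ⟨hα, hp⟩ ↦ exists_isIntegralCurve_radialField hα hp

theorem exists_contDiff_iff_exists_isIntegralCurve_radialField (γ v₀ w₀ : ℝ) :
    (∃ v : ℝ → ℝ, ContDiff ℝ ∞ v ∧ v 0 = v₀ ∧ deriv v 0 = w₀ ∧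
      ∀ t, deriv (deriv v) t + (γ - 1) / 2 * deriv v t ^ 2 + Real.exp (2 * v t) = 0) ↔
    ∃ c : ℝ → ℝ × ℝ, c 0 = (v₀, w₀) ∧ IsIntegralCurve c fun _ ↦ radialField ((1 - γ) / 2) := by
  constructor
  · rintro ⟨v, hv, rfl, rfl, hode⟩
    have hv' : ContDiff ℝ ∞ (deriv v) := (contDiff_infty_iff_deriv.1 hv).2
    refine ⟨fun t ↦ (v t, deriv v t), rfl, fun t ↦ ?_⟩
    refine ((hv.differentiable (by simp) t).hasDerivAt.prodMk
      (hv'.differentiable (by simp) t).hasDerivAt).congr_deriv (Prod.ext rfl ?_)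
    change deriv (deriv v) t = (1 - γ) / 2 * deriv v t ^ 2 - Real.exp (2 * v t)
    linear_combination hode t
  · rintro ⟨c, hc₀, hc⟩
    have hsmooth : ContDiff ℝ ∞ c :=
      contDiff_of_isIntegralCurve (v := fun _ ↦ radialField ((1 - γ) / 2))
        ((contDiff_radialField ((1 - γ) / 2)).comp (contDiff_snd (E := ℝ))) hc
    have hv (t : ℝ) : HasDerivAt (fun t ↦ (c t).1) (c t).2 t := (hc t).fst
    have hw (t : ℝ) : HasDerivAt (fun t ↦ (c t).2)
        ((1 - γ) / 2 * (c t).2 ^ 2 - Real.exp (2 * (c t).1)) t := (hc t).snd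
    have hderiv : deriv (fun t ↦ (c t).1) = fun t ↦ (c t).2 := funext fun t ↦ (hv t).deriv
    refine ⟨fun t ↦ (c t).1, contDiff_fst.comp hsmooth, by simp only [hc₀],
      by simp only [hderiv, hc₀], fun t ↦ ?_⟩
    rw [hderiv, (hw t).deriv]
    ring

theorem nonneg_and_mul_sq_lt_exp_iff (γ v₀ w₀ : ℝ) :
    0 ≤ (1 - γ) / 2 ∧ ((1 - γ) / 2 - 1) * w₀ ^ 2 < Real.exp (2 * v₀) ↔
    ((-1 ≤ γ ∧ γ ≤ 1) ∨
      (w₀ ≠ 0 ∧ -1 - 2 * (w₀ ^ 2)⁻¹ * Real.exp (2 * v₀) < γ ∧ γ < -1) ∨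
      (w₀ = 0 ∧ γ < -1)) := by
  have hexp := Real.exp_pos (2 * v₀)
  rcases le_or_gt (-1) γ with hγ | hγ
  · have : ((1 - γ) / 2 - 1) * w₀ ^ 2 ≤ 0 :=
      mul_nonpos_of_nonpos_of_nonneg (by linarith) (sq_nonneg w₀)
    grind
  rcases eq_or_ne w₀ 0 with rfl | hw₀
  · grind
  · have hw₀' : 0 < w₀ ^ 2 := by positivity
    have hthreshold : ((1 - γ) / 2 - 1) * w₀ ^ 2 < Real.exp (2 * v₀) ↔
        -1 - 2 * (w₀ ^ 2)⁻¹ * Real.exp (2 * v₀) < γ := by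
      rw [← lt_div_iff₀ hw₀', div_eq_inv_mul (Real.exp _), mul_assoc]
      constructor <;> intro h <;> linarith
    grind

end RadialEquation

/-- **Global existence for the radial ODE** (Lemma 5.3): for `γ, v₀, w₀ ∈ ℝ`, the ODE
`v'' + ((γ-1)/2)(v')² + e^{2v} = 0` has a (necessarily unique) smooth solution on all of
`(-∞, ∞)` with `v(0) = v₀`, `v'(0) = w₀` iff `-1 ≤ γ ≤ 1`, or `w₀ ≠ 0` and
`-1 - 2 w₀⁻² e^{2v₀} < γ < -1`, or `w₀ = 0` and `γ < -1`. -/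
theorem ode_global_existence (γ v₀ w₀ : ℝ) :
    (∃ v : ℝ → ℝ, ContDiff ℝ (⊤ : ℕ∞) v ∧ v 0 = v₀ ∧ deriv v 0 = w₀ ∧
      ∀ t : ℝ, deriv (deriv v) t + ((γ - 1) / 2) * (deriv v t) ^ 2 +
        Real.exp (2 * v t) = 0) ↔
    ((-1 ≤ γ ∧ γ ≤ 1) ∨
      (w₀ ≠ 0 ∧ -1 - 2 * (w₀ ^ 2)⁻¹ * Real.exp (2 * v₀) < γ ∧ γ < -1) ∨
      (w₀ = 0 ∧ γ < -1)) := by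
  exact (exists_contDiff_iff_exists_isIntegralCurve_radialField γ v₀ w₀).trans <|
    exists_isIntegralCurve_radialField_iff.trans (nonneg_and_mul_sq_lt_exp_iff γ v₀ w₀)
end
end
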